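/- Let V be a partial Steiner triple system on n ≥ 1 points, let V' be the PSTS on n' = 4n² + 10n points obtained from V by attaching to each point x of V a copy Q(x) of the PSTS Q(z) with Q(x) ∩ V = {x}, the n copies being pairwise disjoint outside V. Let P be the Steiner triple system whose points are the nonempty subsets of the point set of V' and whose triples are the 3-sets of subsets with empty symmetric difference. Let U be obtained from P by, for each triple {a,b,c} of V', replacing the four triples {ab,ac,bc}, {a,b,ab}, {a,c,ac}, {b,c,bc} of P by the four triples {a,b,c}, {a,ab,ac}, {b,ab,bc}, {c,ac,bc} (writing a for {a} and ab for {a,b}). Then U is a Steiner triple system, and Aut U ≅ Aut V' ≅ Aut V. -/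

import Mathlib

open Finset

noncomputable section
open scoped Classical

/-- `T` is the set of triples of a Steiner triple system on the finite type `α`:
every pair of distinct points lies in exactly one triple. -/
def IsSTS {α : Type*} (T : Finset (Finset α)) : Prop :=
  (∀ t ∈ T, t.card = 3) ∧
    ∀ p q : α, p ≠ q → ∃! t : Finset α, t ∈ T ∧ p ∈ t ∧ q ∈ t

/-- `T` is the set of triples of a partial Steiner triple system on `α`:
every pair of distinct points lies in at most one triple. -/
def IsPSTS {α : Type*} (T : Finset (Finset α)) : Prop :=
  (∀ t ∈ T, t.card = 3) ∧
    ∀ p q : α, p ≠ q → ∀ t₁ ∈ T, ∀ t₂ ∈ T, p ∈ t₁ → q ∈ t₁ → p ∈ t₂ → q ∈ t₂ → t₁ = t₂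

/-- `W` is a (closed) subsystem of the triple system `T`. -/
def IsSub {α : Type*} (T : Finset (Finset α)) (W : Finset α) : Prop :=
  ∀ t ∈ T, 2 ≤ (t ∩ W).card → t ⊆ W

/-- `g` is an automorphism of the triple system `T`. -/
def IsAut {α : Type*} (T : Finset (Finset α)) (g : Equiv.Perm α) : Prop :=
  ∀ t : Finset α, t ∈ T ↔ t.image g ∈ T

/-- The automorphism group of a triple system, as a subgroup of the permutation group. -/
def autGroup {α : Type*} (T : Finset (Finset α)) : Subgroup (Equiv.Perm α) where
  carrier := {g : Equiv.Perm α | IsAut T g}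
  one_mem' := by
    intro t
    simp
  mul_mem' := by
    intro a b ha hb t
    have h1 := hb t
    have h2 := ha (t.image b)
    have key : t.image ⇑(a * b) = (t.image ⇑b).image ⇑a := by
      rw [Equiv.Perm.coe_mul, Finset.image_image]
    rw [key, ← h2]
    exact h1
  inv_mem' := by
    intro a ha t
    have h := ha (t.image ⇑a⁻¹)
    have key : (t.image ⇑a⁻¹).image ⇑a = t := by
      rw [Finset.image_image]
      have hc : (⇑a ∘ ⇑a⁻¹) = id := by
        funext x
        simp
      rw [hc, Finset.image_id]
    rw [key] at h
    exact h.symm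

/-- `φ` embeds the triple system `S` onto a subsystem of `T`: it is injective, maps
triples of `S` to triples of `T`, and the triples of `T` inside the image of `φ` are
precisely the images of the triples of `S`. -/
def IsCopy {α β : Type*} [Fintype α] (S : Finset (Finset α)) (T : Finset (Finset β))
    (φ : α → β) : Prop :=
  Function.Injective φ ∧ (∀ s ∈ S, s.image φ ∈ T) ∧
    ∀ t ∈ T, t ⊆ Finset.univ.image φ → ∃ s ∈ S, t = s.image φ

/-- The point set `W` is invariant under every automorphism of `T`. -/
def AutInvariant {β : Type*} (T : Finset (Finset β)) (W : Finset β) : Prop :=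
  ∀ g : Equiv.Perm β, IsAut T g → W.image g = W

/-- For the copy of `S` inside `T` given by `φ`, restriction gives a group isomorphism
from `Aut T` onto `Aut S`: every automorphism of `T` induces (via `φ`) an automorphism
of `S`, and every automorphism of `S` is induced by exactly one automorphism of `T`. -/
def AutRestrictIso {α β : Type*} (T : Finset (Finset β)) (S : Finset (Finset α))
    (φ : α → β) : Prop :=
  (∀ g : Equiv.Perm β, IsAut T g →
      ∃ h : Equiv.Perm α, IsAut S h ∧ ∀ x : α, g (φ x) = φ (h x)) ∧
    ∀ h : Equiv.Perm α, IsAut S h →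
      ∃! g : Equiv.Perm β, IsAut T g ∧ ∀ x : α, g (φ x) = φ (h x)

/-- `φ` embeds `S` as an `Aut T`-invariant subsystem of `T` on which `Aut T` induces
the full automorphism group of `S`, with `Aut T ≅ Aut S` via restriction. -/
def FullEmbedding {α β : Type*} [Fintype α] (S : Finset (Finset α)) (T : Finset (Finset β))
    (φ : α → β) : Prop :=
  IsCopy S T φ ∧ AutInvariant T (Finset.univ.image φ) ∧ AutRestrictIso T S φ

/-- The points of the projective space `PG(n,2)`: nonzero vectors of `GF(2)^{n+1}`. -/
abbrev PGPoint (n : ℕ) := {x : Fin (n + 1) → ZMod 2 // x ≠ 0}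

/-- The lines of `PG(n,2)`: 3-sets of nonzero vectors summing to `0`. -/
def PGTriples (n : ℕ) : Finset (Finset (PGPoint n)) :=
  Finset.univ.filter fun t : Finset (PGPoint n) =>
    t.card = 3 ∧ ∑ v ∈ t, (v : Fin (n + 1) → ZMod 2) = 0

/-- The smallest subsystem of `T` containing the point set `P`. -/
def GeneratedSub {α : Type*} [Fintype α] (T : Finset (Finset α)) (P : Finset α) : Finset α :=
  Finset.univ.filter fun x => ∀ W : Finset α, IsSub T W → P ⊆ W → x ∈ W

/-- `W` is a subsystem of `T` isomorphic to `PG(n,2)`. -/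
def IsPGSub {α : Type*} [Fintype α] (n : ℕ) (T : Finset (Finset α)) (W : Finset α) : Prop :=
  ∃ φ : PGPoint n → α, IsCopy (PGTriples n) T φ ∧ Finset.univ.image φ = W

/-- A triple system is `PG(2,2)`-paired if any two distinct points lie in at least two
subsystems isomorphic to `PG(2,2)`. -/
def PG22Paired {α : Type*} [Fintype α] (T : Finset (Finset α)) : Prop :=
  ∀ p q : α, p ≠ q → ∃ W₁ W₂ : Finset α, W₁ ≠ W₂ ∧
    (p ∈ W₁ ∧ q ∈ W₁ ∧ IsPGSub 2 T W₁) ∧ p ∈ W₂ ∧ q ∈ W₂ ∧ IsPGSub 2 T W₂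

/-- `T` is `PG(3,2)`-2-pointed with respect to the points `p, q`: any four points
including `p` and `q` generate a subsystem isomorphic to `PG(2,2)` or `PG(3,2)`. -/
def PG32TwoPointed {α : Type*} [Fintype α] (T : Finset (Finset α)) (p q : α) : Prop :=
  p ≠ q ∧ ∀ s : Finset α, s.card = 4 → p ∈ s → q ∈ s →
    IsPGSub 2 T (GeneratedSub T s) ∨ IsPGSub 3 T (GeneratedSub T s)

/-- The copy of `Y` inside `2Y+1`. -/
def dp0 {γ : Type*} (a : γ) : γ ⊕ γ ⊕ Unit := Sum.inl a

/-- The disjoint copy `Y₁` of `Y` inside `2Y+1`. -/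
def dp1 {γ : Type*} (a : γ) : γ ⊕ γ ⊕ Unit := Sum.inr (Sum.inl a)

/-- The extra point `*` of `2Y+1`. -/
def dpStar {γ : Type*} : γ ⊕ γ ⊕ Unit := Sum.inr (Sum.inr ())

/-- The triples of the Steiner triple system `2Y+1` built from a system `Y` with
triple set `T`. -/
def DoubleTriples {γ : Type*} [Fintype γ] (T : Finset (Finset γ)) :
    Finset (Finset (γ ⊕ γ ⊕ Unit)) :=
  Finset.univ.filter fun t : Finset (γ ⊕ γ ⊕ Unit) =>
    (∃ s ∈ T, t = s.image dp0) ∨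
    (∃ a : γ, t = {dpStar, dp0 a, dp1 a}) ∨
    (∃ a b c : γ, ({a, b, c} : Finset γ) ∈ T ∧ t = {dp1 a, dp1 b, dp0 c})

/-- The triples of the direct product of two triple systems. -/
def ProdTriples {α β : Type*} [Fintype α] [Fintype β]
    (TA : Finset (Finset α)) (TB : Finset (Finset β)) : Finset (Finset (α × β)) :=
  Finset.univ.filter fun t : Finset (α × β) =>
    (∃ a : α, ∃ s ∈ TB, t = s.image fun b => (a, b)) ∨
    (∃ b : β, ∃ s ∈ TA, t = s.image fun a => (a, b)) ∨
    (∃ a₁ a₂ a₃ : α, ∃ b₁ b₂ b₃ : β, ({a₁, a₂, a₃} : Finset α) ∈ TA ∧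
      ({b₁, b₂, b₃} : Finset β) ∈ TB ∧ t = {(a₁, b₁), (a₂, b₂), (a₃, b₃)})

/-- The triples of Moore's construction `U = X ∪ (V × A)`.  Here `TX` (on `δ`), `TV`
(on `α`), `TY` (on `γ`) are the triple sets of `X`, `V`, `Y`; `j : δ → γ` embeds `X`
as a subsystem of `Y` and `ℓ : A → γ` labels `Y − X` by the group `A`. -/
def MooreTriples {δ α γ A : Type*} [Fintype δ] [Fintype α] [Fintype A] [Group A]
    (TX : Finset (Finset δ)) (TV : Finset (Finset α)) (TY : Finset (Finset γ))
    (j : δ → γ) (ℓ : A → γ) : Finset (Finset (δ ⊕ α × A)) :=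
  Finset.univ.filter fun t : Finset (δ ⊕ α × A) =>
    (∃ s ∈ TX, t = s.image Sum.inl) ∨
    (∃ v : α, ∃ a₁ a₂ : A, ∃ x : δ, ({ℓ a₁, ℓ a₂, j x} : Finset γ) ∈ TY ∧
      t = {Sum.inr (v, a₁), Sum.inr (v, a₂), Sum.inl x}) ∨
    (∃ v : α, ∃ a₁ a₂ a₃ : A, ({ℓ a₁, ℓ a₂, ℓ a₃} : Finset γ) ∈ TY ∧
      t = {Sum.inr (v, a₁), Sum.inr (v, a₂), Sum.inr (v, a₃)}) ∨
    (∃ v₁ v₂ v₃ : α, ∃ a₁ a₂ a₃ : A, ({v₁, v₂, v₃} : Finset α) ∈ TV ∧ a₁ * a₂ * a₃ = 1 ∧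
      t = {Sum.inr (v₁, a₁), Sum.inr (v₂, a₂), Sum.inr (v₃, a₃)})

/-- The hypotheses of Moore's construction: `Y` and `V` are Steiner triple systems,
`A` is a cyclic group, `j` embeds `X` as a subsystem of `Y` (with triple set `TX`),
and `ℓ` is a bijective labeling of `Y − X` by `A`. -/
def MooreSetup {δ α γ A : Type*} [Fintype δ] [Group A]
    (TX : Finset (Finset δ)) (TV : Finset (Finset α)) (TY : Finset (Finset γ))
    (j : δ → γ) (ℓ : A → γ) : Prop :=
  IsSTS TY ∧ IsSTS TV ∧ IsCyclic A ∧ Function.Injective j ∧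
    IsSub TY (Finset.univ.image j) ∧ IsCopy TX TY j ∧
    Function.Injective ℓ ∧ Set.range ℓ = (Set.range j)ᶜ

/-- The subsystem `Y_v = X ∪ (v × A)` of Moore's construction. -/
def MooreY {δ α A : Type*} [Fintype δ] [Fintype A] (v : α) : Finset (δ ⊕ α × A) :=
  (Finset.univ.image (Sum.inl : δ → δ ⊕ α × A)) ∪
    Finset.univ.image fun a : A => (Sum.inr (v, a) : δ ⊕ α × A)

/-- A subsystem of type (3.1) of Moore's construction, where `ε` denotes the unique
involution `−1` of `A`: the seven points `x, (v_i, a_i), (v_i, −a_i)` for a triple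
`{v₁,v₂,v₃}` of `V`, with `a₁a₂a₃ = 1` and `{a_i, −a_i, x}` a triple of `Y`. -/
def MooreType31 {δ α γ A : Type*} [Group A] (TV : Finset (Finset α))
    (TY : Finset (Finset γ)) (j : δ → γ) (ℓ : A → γ) (ε : A)
    (W : Finset (δ ⊕ α × A)) : Prop :=
  ∃ v₁ v₂ v₃ : α, ∃ a₁ a₂ a₃ : A, ∃ x : δ,
    ({v₁, v₂, v₃} : Finset α) ∈ TV ∧ a₁ * a₂ * a₃ = 1 ∧
    ({ℓ a₁, ℓ (ε * a₁), j x} : Finset γ) ∈ TY ∧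
    ({ℓ a₂, ℓ (ε * a₂), j x} : Finset γ) ∈ TY ∧
    ({ℓ a₃, ℓ (ε * a₃), j x} : Finset γ) ∈ TY ∧
    W = {Sum.inl x, Sum.inr (v₁, a₁), Sum.inr (v₁, ε * a₁), Sum.inr (v₂, a₂),
         Sum.inr (v₂, ε * a₂), Sum.inr (v₃, a₃), Sum.inr (v₃, ε * a₃)}

/-- The point set of a family of triples. -/
def ptsOf {β : Type*} (T : Finset (Finset β)) : Finset β := T.sup id

/-- Adjacency of triples: two distinct triples of `T` meeting in a point. -/
def TriAdj {β : Type*} (T : Finset (Finset β)) (t s : Finset β) : Prop :=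
  t ∈ T ∧ s ∈ T ∧ t ≠ s ∧ (t ∩ s).Nonempty

/-- A partial Steiner triple system is cyclic if the graph whose vertices are its
triples, two joined when they meet, is a cycle (equivalently: it has at least three
triples, every triple meets exactly two others, and the graph is connected). -/
def IsCyclicPSTS {β : Type*} (T : Finset (Finset β)) : Prop :=
  3 ≤ T.card ∧ (∀ t ∈ T, (T.filter fun s => s ≠ t ∧ (s ∩ t).Nonempty).card = 2) ∧
    ∀ t ∈ T, ∀ s ∈ T, Relation.ReflTransGen (TriAdj T) t s

/-- The partial Steiner triple system `Q(z)` (for the parameter `n`), with triple set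
`T`, point set `P` and distinguished point `z`: two cyclic PSTSs `C₁, C₂` on
`2n+4` and `2n+6` points meeting exactly in the point `z`, which lies in two triples
of each, triples `{z, z'_i, z_i}` of `C_i` with `z'_i` in two triples of `C_i`, and a
new point `z'` in the single additional triple `{z'_1, z', z'_2}`. -/
def IsQ {β : Type*} (n : ℕ) (T : Finset (Finset β)) (P : Finset β) (z : β) : Prop :=
  ∃ C₁ C₂ : Finset (Finset β), ∃ z' z₁' z₂' z₁ z₂ : β,
    IsPSTS T ∧ IsCyclicPSTS C₁ ∧ IsCyclicPSTS C₂ ∧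
    (ptsOf C₁).card = 2 * n + 4 ∧ (ptsOf C₂).card = 2 * n + 6 ∧
    ptsOf C₁ ∩ ptsOf C₂ = {z} ∧
    (C₁.filter fun t => z ∈ t).card = 2 ∧ (C₂.filter fun t => z ∈ t).card = 2 ∧
    ({z, z₁', z₁} : Finset β) ∈ C₁ ∧ (C₁.filter fun t => z₁' ∈ t).card = 2 ∧
    ({z, z₂', z₂} : Finset β) ∈ C₂ ∧ (C₂.filter fun t => z₂' ∈ t).card = 2 ∧
    z' ∉ ptsOf C₁ ∪ ptsOf C₂ ∧
    T = C₁ ∪ C₂ ∪ {({z₁', z', z₂'} : Finset β)} ∧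
    P = ptsOf C₁ ∪ ptsOf C₂ ∪ {z'}

/-- Nonempty subsets of `β`: the points of the projective space `P` over `GF(2)`
built on a point set `β`. -/
abbrev NESet (β : Type*) := {s : Finset β // s.Nonempty}

/-- The triples of the projective space over `GF(2)` on the nonempty subsets of `β`:
3-sets of subsets with empty symmetric difference. -/
def sdTriples (β : Type*) [Fintype β] : Finset (Finset (NESet β)) :=
  Finset.univ.filter fun t : Finset (NESet β) =>
    ∃ a b c : NESet β, a ≠ b ∧ a ≠ c ∧ b ≠ c ∧ t = {a, b, c} ∧
      symmDiff (symmDiff a.1 b.1) c.1 = ∅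

/-- The singleton `{a}` as a point of the projective space. -/
def sEl {β : Type*} (a : β) : NESet β := ⟨{a}, Finset.singleton_nonempty a⟩

/-- The pair `{a,b}` as a point of the projective space. -/
def pEl {β : Type*} (a b : β) : NESet β := ⟨{a, b}, Finset.insert_nonempty a {b}⟩

/-- The triples of `P` removed in Cameron's construction, for each triple `{a,b,c}`
of `V'`. -/
def removedTriples {β : Type*} [Fintype β] (TV' : Finset (Finset β)) :
    Finset (Finset (NESet β)) :=
  Finset.univ.filter fun t : Finset (NESet β) =>
    ∃ a b c : β, ({a, b, c} : Finset β) ∈ TV' ∧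
      (t = {pEl a b, pEl a c, pEl b c} ∨ t = {sEl a, sEl b, pEl a b} ∨
       t = {sEl a, sEl c, pEl a c} ∨ t = {sEl b, sEl c, pEl b c})

/-- The new triples of Cameron's construction, for each triple `{a,b,c}` of `V'`. -/
def addedTriples {β : Type*} [Fintype β] (TV' : Finset (Finset β)) :
    Finset (Finset (NESet β)) :=
  Finset.univ.filter fun t : Finset (NESet β) =>
    ∃ a b c : β, ({a, b, c} : Finset β) ∈ TV' ∧
      (t = {sEl a, sEl b, sEl c} ∨ t = {sEl a, pEl a b, pEl a c} ∨
       t = {sEl b, pEl a b, pEl b c} ∨ t = {sEl c, pEl a c, pEl b c})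

/-- The Steiner triple system `U` of Cameron's construction obtained from the
projective space `P` and the partial system `V'`. -/
def CameronSTS {β : Type*} [Fintype β] (TV' : Finset (Finset β)) :
    Finset (Finset (NESet β)) :=
  (sdTriples β \ removedTriples TV') ∪ addedTriples TV'

lemma triple_eq_perm {γ : Type*} [DecidableEq γ] {p q r a b c : γ} (hab : a ≠ b)
    (hac : a ≠ c) (hbc : b ≠ c)
    (h : ({p, q, r} : Finset γ) = {a, b, c}) :
    (p = a ∧ q = b ∧ r = c) ∨ (p = a ∧ q = c ∧ r = b) ∨ (p = b ∧ q = a ∧ r = c) ∨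
      (p = b ∧ q = c ∧ r = a) ∨ (p = c ∧ q = a ∧ r = b) ∨ (p = c ∧ q = b ∧ r = a) := by
  have key : ∀ x, (x = p ∨ x = q ∨ x = r) ↔ (x = a ∨ x = b ∨ x = c) := by
    intro x
    simpa using congrArg (x ∈ ·) h
  have := key a
  have := key b
  have := key c
  have := key p
  have := key q
  have := key r
  grind

lemma exists_third {γ : Type*} [DecidableEq γ] {t : Finset γ} (ht : t.card = 3)
    {p q : γ} (hp : p ∈ t)
    (hq : q ∈ t) (hpq : p ≠ q) : ∃ r, r ≠ p ∧ r ≠ q ∧ t = {p, q, r} := by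
  obtain ⟨a, b, c, hab, hac, hbc, rfl⟩ := card_eq_three.mp ht
  simp only [mem_insert, mem_singleton] at hp hq
  rcases hp with rfl | rfl | rfl <;> rcases hq with rfl | rfl | rfl <;>
    first
    | exact absurd rfl hpq
    | exact ⟨_, hac.symm, hbc.symm, rfl⟩
    | exact ⟨_, hab.symm, hbc, by grind⟩
    | exact ⟨_, hbc.symm, hac.symm, by grind⟩
    | exact ⟨_, hbc, hab.symm, by grind⟩
    | exact ⟨_, hab, hac, by grind⟩
    | exact ⟨_, hac, hab, by grind⟩

lemma triple_of_card {γ : Type*} [DecidableEq γ] {a b c : γ} (h : ({a, b, c} : Finset γ).card = 3) :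
    a ≠ b ∧ a ≠ c ∧ b ≠ c := by
  refine ⟨?_, ?_, ?_⟩ <;> rintro rfl
  · have := card_le_two (a := a) (b := c); simp_all
  · have := card_le_two (a := a) (b := b); grind
  · have := card_le_two (a := a) (b := b); simp_all

section Cameron
variable {β : Type*}

lemma mem_sdTriples_iff [Fintype β] {p q r : NESet β} :
    ({p, q, r} : Finset (NESet β)) ∈ sdTriples β ↔ p ≠ q ∧ symmDiff p.1 q.1 = r.1 := by
  simp only [sdTriples, mem_filter, mem_univ, true_and]
  constructor
  · rintro ⟨a, b, c, hab, hac, hbc, h, hs⟩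
    have e : ∀ x : β, (x ∈ c.1 ↔ (x ∈ a.1 ∧ x ∉ b.1 ∨ x ∈ b.1 ∧ x ∉ a.1)) := by
      intro x
      have : x ∉ symmDiff (symmDiff a.1 b.1) c.1 := by simp [hs]
      simp only [mem_symmDiff] at this
      tauto
    rcases triple_eq_perm hab hac hbc h with ⟨rfl, rfl, rfl⟩ | ⟨rfl, rfl, rfl⟩ |
      ⟨rfl, rfl, rfl⟩ | ⟨rfl, rfl, rfl⟩ | ⟨rfl, rfl, rfl⟩ | ⟨rfl, rfl, rfl⟩ <;>
    refine ⟨by first | assumption | (apply Ne.symm; assumption), ?_⟩ <;>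
    · ext x
      have := e x
      simp only [mem_symmDiff]
      tauto
  · rintro ⟨hpq, h⟩
    refine ⟨p, q, r, hpq, ?_, ?_, rfl, by rw [h]; simp⟩
    · rintro rfl
      have := q.2
      rw [symmDiff_eq_left] at h
      simp [h] at this
    · rintro rfl
      have := p.2
      rw [symmDiff_eq_right] at h
      simp [h] at this

lemma sEl_injective : Function.Injective (sEl : β → NESet β) := fun a b h => by
  simpa [sEl] using h

lemma sEl_ne_pEl (c : β) {a b : β} (hab : a ≠ b) : sEl c ≠ pEl a b := by
  intro h
  have := congrArg (fun p : NESet β => p.1.card) h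
  simp [sEl, pEl, hab] at this

lemma pEl_comm (a b : β) : pEl a b = pEl b a := by
  simp [pEl, Finset.pair_comm]

lemma pEl_ne_pEl {a b c : β} (hab : a ≠ b) (hbc : b ≠ c) : pEl a b ≠ pEl a c := by
  intro h
  have := congrArg (fun p : NESet β => b ∈ p.1) h
  simp [pEl, hab.symm, hbc] at this

/-- The point of the projective space on `β` spanned by the images of a set of indices. -/
def liftEl (e : Fin 3 → β) (P : Finset (Fin 3)) : NESet β :=
  if h : P.Nonempty then ⟨P.image e, h.image e⟩ else sEl (e 0)

lemma exists_liftEl {e : Fin 3 → β} {p : NESet β} (h : p.1 ⊂ univ.image e) :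
    ∃ P : Finset (Fin 3), P.Nonempty ∧ P ≠ univ ∧ P.image e = p.1 ∧ liftEl e P = p := by
  have hP : (univ.filter fun i => e i ∈ p.1).image e = p.1 := by
    ext x
    simp only [mem_image, mem_filter, mem_univ, true_and]
    constructor
    · rintro ⟨i, hi, rfl⟩
      exact hi
    · intro hx
      obtain ⟨i, -, rfl⟩ := mem_image.1 (h.1 hx)
      exact ⟨i, hx, rfl⟩
  have hne : (univ.filter fun i => e i ∈ p.1).Nonempty := by
    rw [← image_nonempty (f := e), hP]
    exact p.2
  refine ⟨_, hne, ?_, hP, ?_⟩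
  · intro hu
    rw [hu] at hP
    exact h.ne hP.symm
  · rw [liftEl, dif_pos hne]
    exact Subtype.ext hP

lemma fin_three_line : ∀ P Q R : Finset (Fin 3), P.Nonempty → Q.Nonempty → R.Nonempty →
    P ≠ univ → Q ≠ univ → R ≠ univ → P ≠ Q → symmDiff P Q = R →
    ({P, Q, R} : Finset (Finset (Fin 3))) = {{0, 1}, {0, 2}, {1, 2}} ∨
    ({P, Q, R} : Finset (Finset (Fin 3))) = {{0}, {1}, {0, 1}} ∨
    ({P, Q, R} : Finset (Finset (Fin 3))) = {{0}, {2}, {0, 2}} ∨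
    ({P, Q, R} : Finset (Finset (Fin 3))) = {{1}, {2}, {1, 2}} := by
  decide

lemma fin_three_switched : ∀ P Q R : Finset (Fin 3), P.Nonempty → Q.Nonempty → R.Nonempty →
    P ≠ univ → Q ≠ univ → R ≠ univ → P ≠ Q → symmDiff (symmDiff P Q) R = univ →
    ({P, Q, R} : Finset (Finset (Fin 3))) = {{0}, {1}, {2}} ∨
    ({P, Q, R} : Finset (Finset (Fin 3))) = {{0}, {0, 1}, {0, 2}} ∨
    ({P, Q, R} : Finset (Finset (Fin 3))) = {{1}, {0, 1}, {1, 2}} ∨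
    ({P, Q, R} : Finset (Finset (Fin 3))) = {{2}, {0, 2}, {1, 2}} := by
  decide

lemma univ_image_fin_three (a b c : β) : univ.image ![a, b, c] = {a, b, c} := by
  ext x
  simp [Fin.exists_fin_succ, eq_comm]

lemma fin_three_injective {a b c : β} (hab : a ≠ b) (hac : a ≠ c) (hbc : b ≠ c) :
    Function.Injective ![a, b, c] := by
  intro i j
  fin_cases i <;> fin_cases j <;> simp [hab, hac, hbc, hab.symm, hac.symm, hbc.symm]

lemma sEl_ssubset {s : Finset β} (hs : s.card = 3) {a : β} (ha : a ∈ s) : (sEl a).1 ⊂ s := by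
  refine (ssubset_iff_subset_ne).2 ⟨by simpa [sEl] using ha, ?_⟩
  rintro rfl
  simp [sEl] at hs

lemma pEl_ssubset {s : Finset β} (hs : s.card = 3) {a b : β} (ha : a ∈ s) (hb : b ∈ s) :
    (pEl a b).1 ⊂ s := by
  refine (ssubset_iff_subset_ne).2 ⟨by simp [pEl, insert_subset_iff, ha, hb], ?_⟩
  rintro rfl
  have : ({a, b} : Finset β).card ≤ 2 := card_le_two
  simp only [pEl] at hs
  omega

variable [Fintype β]

lemma mem_removedTriples_iff {T : Finset (Finset β)} (hT : ∀ s ∈ T, s.card = 3)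
    {p q r : NESet β} : ({p, q, r} : Finset (NESet β)) ∈ removedTriples T ↔
      ∃ s ∈ T, p.1 ⊂ s ∧ q.1 ⊂ s ∧ r.1 ⊂ s ∧ p ≠ q ∧ symmDiff p.1 q.1 = r.1 := by
  simp only [removedTriples, mem_filter, mem_univ, true_and]
  constructor
  · rintro ⟨a, b, c, hs, h⟩
    have hc := hT _ hs
    obtain ⟨hab, hac, hbc⟩ := triple_of_card hc
    have hsd : ({p, q, r} : Finset (NESet β)) ∈ sdTriples β := by
      rcases h with h | h | h | h <;> rw [h, mem_sdTriples_iff] <;>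
      · refine ⟨?_, ?_⟩
        · first
          | exact sEl_injective.ne ‹_›
          | exact pEl_ne_pEl hab hbc
        · ext x
          simp only [sEl, pEl, mem_symmDiff, mem_insert, mem_singleton]
          grind
    have hsub : ∀ x ∈ ({p, q, r} : Finset (NESet β)), x.1 ⊂ {a, b, c} := by
      rcases h with h | h | h | h <;> rw [h] <;> simp [sEl_ssubset hc, pEl_ssubset hc]
    simp only [mem_insert, mem_singleton, forall_eq_or_imp, forall_eq] at hsub
    rw [mem_sdTriples_iff] at hsd
    exact ⟨_, hs, hsub.1, hsub.2.1, hsub.2.2, hsd.1, hsd.2⟩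
  · rintro ⟨s, hs, hp, hq, hr, hpq, h⟩
    obtain ⟨a, b, c, hab, hac, hbc, rfl⟩ := card_eq_three.mp (hT s hs)
    refine ⟨a, b, c, hs, ?_⟩
    rw [← univ_image_fin_three] at hp hq hr
    have hinj := fin_three_injective hab hac hbc
    obtain ⟨P, hP, hP', eP, rfl⟩ := exists_liftEl hp
    obtain ⟨Q, hQ, hQ', eQ, rfl⟩ := exists_liftEl hq
    obtain ⟨R, hR, hR', eR, rfl⟩ := exists_liftEl hr
    have hPQ : P ≠ Q := fun h => hpq (by rw [h])
    have hs : symmDiff P Q = R := by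
      apply image_injective hinj
      rw [image_symmDiff _ _ hinj, eP, eQ, h, eR]
    have := fin_three_line P Q R hP hQ hR hP' hQ' hR' hPQ hs
    have key := fun X : Finset (Finset (Fin 3)) =>
      congrArg (image (liftEl ![a, b, c])) (a₁ := {P, Q, R}) (a₂ := X)
    rcases this with h | h | h | h <;> have := key _ h <;>
      simp only [image_insert, image_singleton] at this <;> rw [this] <;>
      simp [liftEl, sEl, pEl]

lemma mem_addedTriples_iff {T : Finset (Finset β)} (hT : ∀ s ∈ T, s.card = 3)
    {p q r : NESet β} : ({p, q, r} : Finset (NESet β)) ∈ addedTriples T ↔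
      ∃ s ∈ T, p.1 ⊂ s ∧ q.1 ⊂ s ∧ r.1 ⊂ s ∧ p ≠ q ∧
        symmDiff (symmDiff p.1 q.1) r.1 = s := by
  simp only [addedTriples, mem_filter, mem_univ, true_and]
  constructor
  · rintro ⟨a, b, c, hs, h⟩
    have hc := hT _ hs
    obtain ⟨hab, hac, hbc⟩ := triple_of_card hc
    have hsub : ∀ x ∈ ({p, q, r} : Finset (NESet β)), x.1 ⊂ {a, b, c} := by
      rcases h with h | h | h | h <;> rw [h] <;> simp [sEl_ssubset hc, pEl_ssubset hc]
    simp only [mem_insert, mem_singleton, forall_eq_or_imp, forall_eq] at hsub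
    obtain ⟨u, v, w, huv, huw, hvw, huvw, e⟩ : ∃ u v w : NESet β, u ≠ v ∧ u ≠ w ∧ v ≠ w ∧
        ({p, q, r} : Finset (NESet β)) = {u, v, w} ∧
        symmDiff (symmDiff u.1 v.1) w.1 = {a, b, c} := by
      rcases h with h | h | h | h <;> refine ⟨_, _, _, ?_, ?_, ?_, h, ?_⟩ <;>
      first
      | exact sEl_injective.ne ‹_›
      | exact sEl_ne_pEl _ ‹_›
      | exact pEl_ne_pEl hab hbc
      | (rw [pEl_comm a b]; exact pEl_ne_pEl hab.symm hac)
      | (rw [pEl_comm a c, pEl_comm b c]; exact pEl_ne_pEl hac.symm hab)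
      | (ext x
         simp only [sEl, pEl, mem_symmDiff, mem_insert, mem_singleton]
         grind)
    refine ⟨_, hs, hsub.1, hsub.2.1, hsub.2.2, ?_⟩
    rw [← e]
    clear hsub h e
    rcases triple_eq_perm huv huw hvw huvw with ⟨rfl, rfl, rfl⟩ | ⟨rfl, rfl, rfl⟩ |
      ⟨rfl, rfl, rfl⟩ | ⟨rfl, rfl, rfl⟩ | ⟨rfl, rfl, rfl⟩ | ⟨rfl, rfl, rfl⟩ <;>
    refine ⟨by first | assumption | (apply Ne.symm; assumption), ?_⟩ <;>
    ac_rfl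
  · rintro ⟨s, hs, hp, hq, hr, hpq, h⟩
    obtain ⟨a, b, c, hab, hac, hbc, rfl⟩ := card_eq_three.mp (hT s hs)
    refine ⟨a, b, c, hs, ?_⟩
    rw [← univ_image_fin_three] at hp hq hr h
    have hinj := fin_three_injective hab hac hbc
    obtain ⟨P, hP, hP', eP, rfl⟩ := exists_liftEl hp
    obtain ⟨Q, hQ, hQ', eQ, rfl⟩ := exists_liftEl hq
    obtain ⟨R, hR, hR', eR, rfl⟩ := exists_liftEl hr
    have hPQ : P ≠ Q := fun h => hpq (by rw [h])
    have hs : symmDiff (symmDiff P Q) R = univ := by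
      apply image_injective hinj
      rw [image_symmDiff _ _ hinj, image_symmDiff _ _ hinj, eP, eQ, eR, h]
    have := fin_three_switched P Q R hP hQ hR hP' hQ' hR' hPQ hs
    have key := fun X : Finset (Finset (Fin 3)) =>
      congrArg (image (liftEl ![a, b, c])) (a₁ := {P, Q, R}) (a₂ := X)
    rcases this with h | h | h | h <;> have := key _ h <;>
      simp only [image_insert, image_singleton] at this <;> rw [this] <;>
      simp [liftEl, sEl, pEl]

end Cameron

lemma IsAut.triple_mem_iff {γ : Type*} [DecidableEq γ] {T : Finset (Finset γ)}
    {g : Equiv.Perm γ} (hg : IsAut T g) (a b c : γ) :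
    ({a, b, c} : Finset γ) ∈ T ↔ ({g a, g b, g c} : Finset γ) ∈ T := by
  obtain rfl : ‹DecidableEq γ› = fun a b => Classical.propDecidable (a = b) :=
    Subsingleton.elim _ _
  rw [hg]
  simp [image_insert]

lemma isAut_of_triple_mem_iff {γ : Type*} [DecidableEq γ] {T : Finset (Finset γ)}
    (hT : ∀ t ∈ T, t.card = 3) {g : Equiv.Perm γ}
    (h : ∀ a b c : γ, a ≠ b → a ≠ c → b ≠ c →
      (({a, b, c} : Finset γ) ∈ T ↔ ({g a, g b, g c} : Finset γ) ∈ T)) : IsAut T g := by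
  obtain rfl : ‹DecidableEq γ› = fun a b => Classical.propDecidable (a = b) :=
    Subsingleton.elim _ _
  intro t
  by_cases ht : t.card = 3
  · obtain ⟨a, b, c, hab, hac, hbc, rfl⟩ := card_eq_three.mp ht
    rw [h a b c hab hac hbc]
    simp [image_insert]
  · refine iff_of_false (fun h => ht (hT _ h)) fun h => ht ?_
    rw [← hT _ h, card_image_of_injective _ g.injective]

lemma IsAut.inv {γ : Type*} {T : Finset (Finset γ)} {g : Equiv.Perm γ} (hg : IsAut T g) :
    IsAut T g⁻¹ := (autGroup T).inv_mem hg

/-- The points `x` completing the line through `p` and `q` to a Pasch configuration. -/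
def paschPoints {γ : Type*} [Fintype γ] [DecidableEq γ] (T : Finset (Finset γ)) (p q : γ) :
    Finset γ :=
  univ.filter fun x => ∃ u v r : γ, ({x, p, u} : Finset γ) ∈ T ∧ ({x, q, v} : Finset γ) ∈ T ∧
    ({u, v, r} : Finset γ) ∈ T ∧ ({p, q, r} : Finset γ) ∈ T

lemma IsAut.card_paschPoints {γ : Type*} [Fintype γ] [DecidableEq γ] {T : Finset (Finset γ)}
    {g : Equiv.Perm γ} (hg : IsAut T g) (p q : γ) :
    (paschPoints T (g p) (g q)).card = (paschPoints T p q).card := by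
  symm
  refine card_equiv g fun x => ?_
  simp only [paschPoints, mem_filter, mem_univ, true_and]
  constructor
  · rintro ⟨u, v, r, h1, h2, h3, h4⟩
    exact ⟨g u, g v, g r, (hg.triple_mem_iff _ _ _).1 h1, (hg.triple_mem_iff _ _ _).1 h2,
      (hg.triple_mem_iff _ _ _).1 h3, (hg.triple_mem_iff _ _ _).1 h4⟩
  · rintro ⟨u, v, r, h1, h2, h3, h4⟩
    obtain ⟨u, rfl⟩ := g.surjective u
    obtain ⟨v, rfl⟩ := g.surjective v
    obtain ⟨r, rfl⟩ := g.surjective r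
    exact ⟨u, v, r, (hg.triple_mem_iff _ _ _).2 h1, (hg.triple_mem_iff _ _ _).2 h2,
      (hg.triple_mem_iff _ _ _).2 h3, (hg.triple_mem_iff _ _ _).2 h4⟩

section Cameron
variable {β : Type*} [Fintype β] {T : Finset (Finset β)}

lemma mem_cameronSTS_iff (hT : ∀ s ∈ T, s.card = 3) {p q r : NESet β} :
    ({p, q, r} : Finset (NESet β)) ∈ CameronSTS T ↔
      (p ≠ q ∧ symmDiff p.1 q.1 = r.1 ∧ ¬ ∃ s ∈ T, p.1 ⊂ s ∧ q.1 ⊂ s ∧ r.1 ⊂ s) ∨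
      ∃ s ∈ T, p.1 ⊂ s ∧ q.1 ⊂ s ∧ r.1 ⊂ s ∧ p ≠ q ∧
        symmDiff (symmDiff p.1 q.1) r.1 = s := by
  rw [CameronSTS, mem_union, mem_sdiff, mem_sdTriples_iff, mem_removedTriples_iff hT,
    mem_addedTriples_iff hT]
  refine or_congr_left ⟨?_, ?_⟩
  · rintro ⟨⟨h1, h2⟩, h3⟩
    exact ⟨h1, h2, fun ⟨s, hs, a, b, c⟩ => h3 ⟨s, hs, a, b, c, h1, h2⟩⟩
  · rintro ⟨h1, h2, h3⟩
    exact ⟨⟨h1, h2⟩, fun ⟨s, hs, a, b, c, _⟩ => h3 ⟨s, hs, a, b, c⟩⟩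

lemma card_of_mem_addedTriples (hT : ∀ s ∈ T, s.card = 3) {t : Finset (NESet β)}
    (ht : t ∈ addedTriples T) : t.card = 3 := by
  obtain ⟨p, q, r, rfl⟩ : ∃ p q r, t = {p, q, r} := by
    simp only [addedTriples, mem_filter, mem_univ, true_and] at ht
    obtain ⟨a, b, c, -, h | h | h | h⟩ := ht <;> exact ⟨_, _, _, h⟩
  obtain ⟨s, hs, hp, hq, hr, hpq, h⟩ := (mem_addedTriples_iff hT).1 ht
  refine card_eq_three.2 ⟨p, q, r, hpq, ?_, ?_, rfl⟩
  · rintro rfl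
    refine hq.ne ?_
    rw [← h]
    ext x
    simp only [mem_symmDiff]
    tauto
  · rintro rfl
    refine hp.ne ?_
    rw [← h]
    simp

lemma card_of_mem_cameronSTS (hT : ∀ s ∈ T, s.card = 3) {t : Finset (NESet β)}
    (ht : t ∈ CameronSTS T) : t.card = 3 := by
  rw [CameronSTS, mem_union, mem_sdiff] at ht
  rcases ht with ht | ht
  · have := ht.1
    simp only [sdTriples, mem_filter, mem_univ, true_and] at this
    obtain ⟨a, b, c, hab, hac, hbc, rfl, -⟩ := this
    exact card_eq_three.2 ⟨a, b, c, hab, hac, hbc, rfl⟩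
  · exact card_of_mem_addedTriples hT ht

lemma IsPSTS.eq_of_subsets (hT : IsPSTS T) {p q : NESet β} (hpq : p ≠ q) {s s' : Finset β}
    (hs : s ∈ T) (hs' : s' ∈ T) (hp : p.1 ⊆ s) (hq : q.1 ⊆ s) (hp' : p.1 ⊆ s')
    (hq' : q.1 ⊆ s') : s = s' := by
  obtain ⟨x, hx⟩ := p.2
  obtain ⟨y, hy⟩ := q.2
  by_cases hxy : x = y
  · subst hxy
    obtain ⟨z, hz⟩ : ∃ z, ¬ (z ∈ p.1 ↔ z ∈ q.1) := by
      by_contra! h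
      exact hpq (Subtype.ext (Finset.ext h))
    have hzx : x ≠ z := by
      rintro rfl
      exact hz (iff_of_true hx hy)
    have h : z ∈ p.1 ∨ z ∈ q.1 := by tauto
    rcases h with h | h
    · exact hT.2 x z hzx s hs s' hs' (hp hx) (hp h) (hp' hx) (hp' h)
    · exact hT.2 x z hzx s hs s' hs' (hp hx) (hq h) (hp' hx) (hq' h)
  · exact hT.2 x y hxy s hs s' hs' (hp hx) (hq hy) (hp' hx) (hq' hy)

lemma cameronSTS_third_unique (hT : IsPSTS T) {p q r r' : NESet β}
    (h : ({p, q, r} : Finset (NESet β)) ∈ CameronSTS T)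
    (h' : ({p, q, r'} : Finset (NESet β)) ∈ CameronSTS T) : r = r' := by
  have aux : ∀ {r r' : NESet β} {s : Finset β}, s ∈ T → p.1 ⊂ s → q.1 ⊂ s → r.1 ⊂ s →
      symmDiff (symmDiff p.1 q.1) r.1 = s → symmDiff p.1 q.1 = r'.1 → r'.1 ⊂ s := by
    intro r r' s hs hp hq hr he he'
    refine Finset.ssubset_iff_subset_ne.2 ⟨?_, ?_⟩
    · rw [← he', symmDiff_def]
      exact union_subset (sdiff_subset.trans hp.1) (sdiff_subset.trans hq.1)
    · intro e
      rw [he', e, symmDiff_eq_left] at he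
      have := r.2
      simp [he] at this
  rw [mem_cameronSTS_iff hT.1] at h h'
  rcases h with ⟨hpq, h, hn⟩ | ⟨s, hs, hp, hq, hr, hpq, h⟩ <;>
  rcases h' with ⟨hpq', h', hn'⟩ | ⟨s', hs', hp', hq', hr', hpq', h'⟩
  · exact Subtype.ext (h.symm.trans h')
  · exact absurd ⟨s', hs', hp', hq', aux hs' hp' hq' hr' h' h⟩ hn
  · exact absurd ⟨s, hs, hp, hq, aux hs hp hq hr h h'⟩ hn'
  · obtain rfl := hT.eq_of_subsets hpq hs hs' hp.1 hq.1 hp'.1 hq'.1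
    rw [← h'] at h
    exact Subtype.ext (symmDiff_right_injective _ h)

theorem isSTS_cameronSTS (hT : IsPSTS T) : IsSTS (CameronSTS T) := by
  refine ⟨fun t ht => card_of_mem_cameronSTS hT.1 ht, fun p q hpq => ?_⟩
  obtain ⟨r, hr⟩ : ∃ r, ({p, q, r} : Finset (NESet β)) ∈ CameronSTS T := by
    have hne : (symmDiff p.1 q.1).Nonempty := by
      rw [nonempty_iff_ne_empty]
      intro h
      exact hpq (Subtype.ext (symmDiff_eq_bot.1 h))
    by_cases h : ∃ s ∈ T, p.1 ⊂ s ∧ q.1 ⊂ s ∧ symmDiff p.1 q.1 ⊂ s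
    · obtain ⟨s, hs, hp, hq, hr⟩ := h
      have hne' : (symmDiff (symmDiff p.1 q.1) s).Nonempty := by
        rw [nonempty_iff_ne_empty]
        intro h
        exact hr.ne (symmDiff_eq_bot.1 h)
      refine ⟨⟨_, hne'⟩, ?_⟩
      rw [mem_cameronSTS_iff hT.1]
      refine Or.inr ⟨s, hs, hp, hq, Finset.ssubset_iff_subset_ne.2 ⟨?_, ?_⟩, hpq, ?_⟩
      · show symmDiff (symmDiff p.1 q.1) s ⊆ s
        rw [symmDiff_def]
        exact union_subset (sdiff_subset.trans hr.1) sdiff_subset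
      · intro h
        rw [symmDiff_eq_right] at h
        exact hne.ne_empty h
      · simp
    · refine ⟨⟨_, hne⟩, ?_⟩
      rw [mem_cameronSTS_iff hT.1]
      exact Or.inl ⟨hpq, rfl, h⟩
  refine ⟨{p, q, r}, ⟨hr, by simp, by simp⟩, ?_⟩
  rintro t ⟨ht, hp, hq⟩
  obtain ⟨r', -, -, rfl⟩ := exists_third (card_of_mem_cameronSTS hT.1 ht) hp hq hpq
  rw [cameronSTS_third_unique hT hr ht]

lemma mem_cameronSTS_iff_of_large (hT : ∀ s ∈ T, s.card = 3) {p q r : NESet β}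
    (hp : 3 ≤ p.1.card) :
    ({p, q, r} : Finset (NESet β)) ∈ CameronSTS T ↔ p ≠ q ∧ symmDiff p.1 q.1 = r.1 := by
  have h : ∀ s ∈ T, ¬ p.1 ⊂ s := fun s hs h => by
    have := card_lt_card h
    have := hT s hs
    omega
  rw [mem_cameronSTS_iff hT]
  constructor
  · rintro (⟨h1, h2, -⟩ | ⟨s, hs, hp, -⟩)
    · exact ⟨h1, h2⟩
    · exact absurd hp (h s hs)
  · rintro ⟨h1, h2⟩
    exact Or.inl ⟨h1, h2, fun ⟨s, hs, hp, _⟩ => h s hs hp⟩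

lemma card_le_add_card_symmDiff (x y : Finset β) :
    x.card ≤ y.card + (symmDiff x y).card := by
  refine (card_le_card ?_).trans (card_union_le _ _)
  intro z hz
  by_cases h : z ∈ y <;> simp [mem_symmDiff, h, hz]

lemma symmDiff_symmDiff_cancel (x p q : Finset β) :
    symmDiff (symmDiff x p) (symmDiff x q) = symmDiff p q := by
  rw [symmDiff_symmDiff_symmDiff_comm, symmDiff_self, bot_symmDiff]

lemma card_le_four_of_mem_paschPoints (hT : IsPSTS T) {p q r x : NESet β}
    (h : ({p, q, r} : Finset (NESet β)) ∈ addedTriples T)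
    (hx : x ∈ paschPoints (CameronSTS T) p q) : x.1.card ≤ 4 := by
  by_contra! hc
  simp only [paschPoints, mem_filter, mem_univ, true_and] at hx
  obtain ⟨u, v, r', h1, h2, h3, h4⟩ := hx
  obtain rfl := cameronSTS_third_unique hT h4 (mem_union_right _ h)
  obtain ⟨s, hs, hp, hq, hr, hpq, he⟩ := (mem_addedTriples_iff hT.1).1 h
  have hsc := hT.1 s hs
  rw [mem_cameronSTS_iff_of_large hT.1 (by omega)] at h1 h2
  have hu : 3 ≤ u.1.card := by
    have := card_lt_card hp
    have := card_le_add_card_symmDiff x.1 p.1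
    rw [h1.2] at this
    omega
  rw [mem_cameronSTS_iff_of_large hT.1 hu, ← h1.2, ← h2.2] at h3
  have : symmDiff p.1 q.1 = r'.1 := by
    rw [← h3.2, symmDiff_symmDiff_cancel]
  rw [this] at he
  simp at he
  simp [← he] at hsc

lemma mem_paschPoints_of_large (hT : IsPSTS T) {p q r x : NESet β}
    (h : ({p, q, r} : Finset (NESet β)) ∈ CameronSTS T)
    (h' : ({p, q, r} : Finset (NESet β)) ∉ addedTriples T)
    (hxq : x ≠ q) (hx : 3 ≤ x.1.card) (hxp : 3 ≤ (symmDiff x.1 p.1).card) :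
    x ∈ paschPoints (CameronSTS T) p q := by
  have hsd : p ≠ q ∧ symmDiff p.1 q.1 = r.1 := by
    rw [CameronSTS, mem_union, mem_sdiff] at h
    exact mem_sdTriples_iff.1 (h.resolve_right h').1
  simp only [paschPoints, mem_filter, mem_univ, true_and]
  have hv : (symmDiff x.1 q.1).Nonempty := by
    rw [nonempty_iff_ne_empty]
    intro h
    exact hxq (Subtype.ext (symmDiff_eq_bot.1 h))
  refine ⟨⟨symmDiff x.1 p.1, card_pos.1 (by omega)⟩, ⟨_, hv⟩, r, ?_, ?_, ?_, h⟩
  · rw [mem_cameronSTS_iff_of_large hT.1 hx]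
    refine ⟨?_, rfl⟩
    rintro rfl
    simp at hxp
  · rw [mem_cameronSTS_iff_of_large hT.1 hx]
    exact ⟨hxq, rfl⟩
  · rw [mem_cameronSTS_iff_of_large hT.1 hxp]
    refine ⟨fun h => hsd.1 (Subtype.ext ?_), ?_⟩
    · simp only [Subtype.mk.injEq] at h
      exact symmDiff_right_injective _ h
    · rw [← hsd.2, symmDiff_symmDiff_cancel]

lemma card_small_sets (hN : 14 ≤ Fintype.card β) :
    (univ.filter fun x : Finset β => x.card ≤ 4).card +
      2 * (univ.filter fun x : Finset β => x.card ≤ 2).card + 1 ≤ Fintype.card (Finset β) := by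
  obtain ⟨u, -, hu⟩ := exists_subset_card_eq (s := (univ : Finset β)) (n := 7)
    (by rw [card_univ]; omega)
  obtain ⟨v, hv', hv⟩ := exists_subset_card_eq (s := uᶜ) (n := 7) (by rw [card_compl]; omega)
  have huv : Disjoint u v := (disjoint_compl_right (a := u)).mono_right hv'
  have huv' : (symmDiff u v).card = 14 := by
    rw [huv.symmDiff_eq_sup, sup_eq_union, card_union_of_disjoint huv, hu, hv]
  set A := univ.filter fun x : Finset β => x.card ≤ 4 with hA
  set B := univ.filter fun x : Finset β => x.card ≤ 2 with hB
  have inj : ∀ w : Finset β, (B.image (symmDiff w)).card = B.card := fun w =>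
    card_image_of_injective _ (symmDiff_right_injective w)
  have memB : ∀ w x : Finset β, x ∈ B.image (symmDiff w) → (symmDiff w x).card ≤ 2 := by
    intro w x hx
    obtain ⟨y, hy, rfl⟩ := mem_image.1 hx
    simpa [hB] using hy
  have memA : ∀ x : Finset β, x ∈ A → x.card ≤ 4 := by simp [hA]
  have d1 : Disjoint A (B.image (symmDiff u)) := by
    rw [disjoint_left]
    intro x hx hx'
    have := memA x hx
    have := memB u x hx'
    have := card_le_add_card_symmDiff u x
    omega
  have d2 : Disjoint (A ∪ B.image (symmDiff u)) (B.image (symmDiff v)) := by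
    rw [disjoint_left]
    intro x hx hx'
    have h1 := memB v x hx'
    have h2 := card_le_add_card_symmDiff v x
    rcases mem_union.1 hx with hx | hx
    · have := memA x hx
      omega
    · have h3 := memB u x hx
      have h4 := card_le_add_card_symmDiff (symmDiff u v) (symmDiff u x)
      rw [symmDiff_symmDiff_cancel] at h4
      omega
  have d3 : univ ∉ A ∪ B.image (symmDiff u) ∪ B.image (symmDiff v) := by
    intro h
    rw [mem_union, mem_union] at h
    have hc : (univ : Finset β).card = Fintype.card β := card_univ
    rcases h with (h | h) | h
    · have := memA _ h
      omega
    · have := memB _ _ h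
      have := card_le_add_card_symmDiff univ u
      rw [symmDiff_comm] at this
      omega
    · have := memB _ _ h
      have := card_le_add_card_symmDiff univ v
      rw [symmDiff_comm] at this
      omega
  have := card_le_univ (insert univ (A ∪ B.image (symmDiff u) ∪ B.image (symmDiff v)))
  rw [card_insert_of_notMem d3, card_union_of_disjoint d2, card_union_of_disjoint d1, inj,
    inj] at this
  omega

lemma card_paschPoints_lt (hT : IsPSTS T) (hN : 14 ≤ Fintype.card β) {p q r p' q' r' : NESet β}
    (h : ({p, q, r} : Finset (NESet β)) ∈ addedTriples T)
    (h' : ({p', q', r'} : Finset (NESet β)) ∈ CameronSTS T)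
    (hn : ({p', q', r'} : Finset (NESet β)) ∉ addedTriples T) :
    (paschPoints (CameronSTS T) p q).card < (paschPoints (CameronSTS T) p' q').card := by
  set A := univ.filter fun x : Finset β => x.card ≤ 4 with hA
  set B := univ.filter fun x : Finset β => x.card ≤ 2 with hB
  have h1 : (paschPoints (CameronSTS T) p q).card + 1 ≤ A.card := by
    rw [← card_image_of_injective _ Subtype.val_injective,
      ← card_insert_of_notMem (a := (∅ : Finset β))]
    · refine card_le_card (insert_subset (by simp [hA]) ?_)
      intro x hx
      obtain ⟨y, hy, rfl⟩ := mem_image.1 hx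
      simpa [hA] using card_le_four_of_mem_paschPoints hT h hy
    · intro hx
      obtain ⟨y, hy, hy'⟩ := mem_image.1 hx
      have := y.2
      simp [hy'] at this
  have h2 : Fintype.card (Finset β) ≤
      (paschPoints (CameronSTS T) p' q').card + 2 * B.card + 1 := by
    have hsub : (univ : Finset (Finset β)) ⊆ (((paschPoints (CameronSTS T) p' q').image
        Subtype.val ∪ B) ∪ B.image (symmDiff p'.1)) ∪ {q'.1} := by
      intro x _
      simp only [mem_union, mem_singleton]
      by_cases hx : x.card ≤ 2
      · exact Or.inl (Or.inl (Or.inr (by simp [hB, hx])))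
      by_cases hx' : (symmDiff x p'.1).card ≤ 2
      · refine Or.inl (Or.inr (mem_image.2 ⟨symmDiff x p'.1, by simp [hB, hx'], ?_⟩))
        rw [symmDiff_comm x, symmDiff_symmDiff_cancel_left]
      by_cases hq : x = q'.1
      · exact Or.inr hq
      refine Or.inl (Or.inl (Or.inl (mem_image.2 ⟨⟨x, card_pos.1 (by omega)⟩, ?_, rfl⟩)))
      exact mem_paschPoints_of_large hT h' hn (fun e => hq (by rw [← e]))
        (show 3 ≤ x.card by omega) (show 3 ≤ (symmDiff x p'.1).card by omega)
    have := card_le_card hsub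
    rw [card_univ] at this
    have a1 := card_union_le (((paschPoints (CameronSTS T) p' q').image Subtype.val ∪ B) ∪
      B.image (symmDiff p'.1)) {q'.1}
    have a2 := card_union_le ((paschPoints (CameronSTS T) p' q').image Subtype.val ∪ B)
      (B.image (symmDiff p'.1))
    have a3 := card_union_le ((paschPoints (CameronSTS T) p' q').image Subtype.val) B
    have a4 := card_image_le (s := B) (f := symmDiff p'.1)
    have a5 := card_image_le (s := paschPoints (CameronSTS T) p' q') (f := Subtype.val)
    rw [card_singleton] at a1
    omega
  have := card_small_sets hN
  rw [← hA, ← hB] at this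
  omega

lemma IsAut.mem_addedTriples (hT : IsPSTS T) (hN : 14 ≤ Fintype.card β)
    {G : Equiv.Perm (NESet β)} (hG : IsAut (CameronSTS T) G) {p q r : NESet β}
    (h : ({p, q, r} : Finset (NESet β)) ∈ addedTriples T) :
    ({G p, G q, G r} : Finset (NESet β)) ∈ addedTriples T := by
  by_contra hn
  have := card_paschPoints_lt hT hN h
    ((hG.triple_mem_iff p q r).1 (mem_union_right _ h)) hn
  rw [hG.card_paschPoints] at this
  exact lt_irrefl _ this

end Cameron

section Cameron
variable {β : Type*} [Fintype β] {T : Finset (Finset β)}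

lemma ne_of_triple_mem (hT : ∀ s ∈ T, s.card = 3) {a b c : β}
    (h : ({a, b, c} : Finset β) ∈ T) : a ≠ b ∧ a ≠ c ∧ b ≠ c := by
  have := hT _ h
  refine ⟨?_, ?_, ?_⟩ <;> rintro rfl
  · rw [insert_idem] at this
    have := card_le_two (a := a) (b := c)
    omega
  · rw [insert_comm, insert_eq_of_mem (by simp : a ∈ ({a} : Finset β))] at this
    have := card_le_two (a := b) (b := a)
    omega
  · rw [insert_eq_of_mem (by simp : b ∈ ({b} : Finset β))] at this
    have := card_le_two (a := a) (b := b)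
    omega

/-- An added triple through a point that is not a singleton has the form `{a, ab, ac}`. -/
lemma addedTriples_normal_form {t : Finset (NESet β)} (ht : t ∈ addedTriples T)
    {p : NESet β} (hp : p ∈ t) (hs : ∀ a, p ≠ sEl a) :
    ∃ a b c, ({a, b, c} : Finset β) ∈ T ∧ p = pEl a b ∧ t = {sEl a, pEl a b, pEl a c} := by
  simp only [addedTriples, mem_filter, mem_univ, true_and] at ht
  obtain ⟨a, b, c, h, rfl | rfl | rfl | rfl⟩ := ht <;>
    simp only [mem_insert, mem_singleton, hs, false_or, or_false] at hp
  · rcases hp with rfl | rfl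
    · exact ⟨a, b, c, h, rfl, rfl⟩
    · exact ⟨a, c, b, by rwa [pair_comm c b], rfl, by rw [pair_comm (pEl a b)]⟩
  · rcases hp with rfl | rfl
    · exact ⟨b, a, c, by rwa [insert_comm], pEl_comm _ _, by rw [pEl_comm a b]⟩
    · exact ⟨b, c, a, by rwa [pair_comm, insert_comm], rfl,
        by rw [pEl_comm a b, pair_comm (pEl b a)]⟩
  · rcases hp with rfl | rfl
    · exact ⟨c, a, b, by rwa [insert_comm, pair_comm], pEl_comm _ _,
        by rw [pEl_comm a c, pEl_comm b c]⟩
    · exact ⟨c, b, a, by rwa [insert_comm, pair_comm, insert_comm], pEl_comm _ _,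
        by rw [pEl_comm a c, pEl_comm b c, pair_comm (pEl c a)]⟩

lemma exists_eq_sEl_of_three_le (hT : IsPSTS T) {p : NESet β}
    (h : 3 ≤ ((addedTriples T).filter fun t => p ∈ t).card) : ∃ a, p = sEl a := by
  by_contra! hs
  obtain ⟨t, ht⟩ : ((addedTriples T).filter fun t => p ∈ t).Nonempty :=
    card_pos.1 (by omega)
  obtain ⟨ht, hp⟩ := mem_filter.1 ht
  obtain ⟨x, y, z, hxyz, rfl, -⟩ := addedTriples_normal_form ht hp hs
  have hsub : ((addedTriples T).filter fun t => pEl x y ∈ t) ⊆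
      {{sEl x, pEl x y, pEl x z}, {sEl y, pEl y x, pEl y z}} := by
    intro t' ht'
    obtain ⟨ht', hp'⟩ := mem_filter.1 ht'
    obtain ⟨a, b, c, habc, hab, rfl⟩ := addedTriples_normal_form ht' hp' hs
    have hne := ne_of_triple_mem hT.1 habc
    have hne' := ne_of_triple_mem hT.1 hxyz
    have third : ∀ {x y z c : β}, x ≠ c → y ≠ c → ({x, y, c} : Finset β) = {x, y, z} → c = z := by
      intro x y z c h1 h2 e
      have : c ∈ ({x, y, z} : Finset β) := e ▸ by simp
      simpa [h1.symm, h2.symm] using this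
    have hab : ({x, y} : Finset β) = {a, b} := congrArg Subtype.val hab
    rw [← coe_inj, coe_pair, coe_pair, Set.pair_eq_pair_iff] at hab
    rcases hab with ⟨rfl, rfl⟩ | ⟨rfl, rfl⟩
    · obtain rfl := third hne.2.1 hne.2.2
        (hT.2 x y hne.1 _ habc _ hxyz (by simp) (by simp) (by simp) (by simp))
      simp
    · rw [insert_comm] at hxyz
      obtain rfl := third hne.2.1 hne.2.2
        (hT.2 y x hne.1 _ habc _ hxyz (by simp) (by simp) (by simp) (by simp))
      simp
  have := card_le_card hsub
  have := card_le_two (a := ({sEl x, pEl x y, pEl x z} : Finset (NESet β)))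
    (b := {sEl y, pEl y x, pEl y z})
  omega

lemma sEl_triple_mem_addedTriples {a b c : β} (h : ({a, b, c} : Finset β) ∈ T) :
    ({sEl a, sEl b, sEl c} : Finset (NESet β)) ∈ addedTriples T := by
  simp only [addedTriples, mem_filter, mem_univ, true_and]
  exact ⟨a, b, c, h, Or.inl rfl⟩

lemma three_le_card_filter_sEl (hT : IsPSTS T) {a : β} {s s' : Finset β} (hs : s ∈ T)
    (hs' : s' ∈ T) (hne : s ≠ s') (ha : a ∈ s) (ha' : a ∈ s') :
    3 ≤ ((addedTriples T).filter fun t => sEl a ∈ t).card := by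
  obtain ⟨b, c, hab, hac, hbc, rfl⟩ : ∃ b c, a ≠ b ∧ a ≠ c ∧ b ≠ c ∧ s = {a, b, c} := by
    obtain ⟨b, hb, hba⟩ := exists_mem_ne (by rw [hT.1 s hs]; norm_num) a
    obtain ⟨c, h1, h2, h3⟩ := exists_third (hT.1 s hs) ha hb hba.symm
    exact ⟨b, c, hba.symm, h1.symm, h2.symm, h3⟩
  obtain ⟨d, e, rfl⟩ : ∃ d e, s' = {a, d, e} := by
    obtain ⟨b, hb, hba⟩ := exists_mem_ne (by rw [hT.1 s' hs']; norm_num) a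
    obtain ⟨c, h1, h2, h3⟩ := exists_third (hT.1 s' hs') ha' hb hba.symm
    exact ⟨b, c, h3⟩
  have hsub : ({{sEl a, sEl b, sEl c}, {sEl a, pEl a b, pEl a c}, {sEl a, sEl d, sEl e}} :
      Finset (Finset (NESet β))) ⊆ (addedTriples T).filter fun t => sEl a ∈ t := by
    simp only [insert_subset_iff, singleton_subset_iff, mem_filter]
    refine ⟨⟨sEl_triple_mem_addedTriples hs, by simp⟩, ⟨?_, by simp⟩,
      sEl_triple_mem_addedTriples hs', by simp⟩
    simp only [addedTriples, mem_filter, mem_univ, true_and]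
    exact ⟨a, b, c, hs, Or.inr (Or.inl rfl)⟩
  refine le_trans (card_eq_three.2 ⟨_, _, _, ?_, ?_, ?_, rfl⟩).ge (card_le_card hsub)
  · intro h
    have : sEl b ∈ ({sEl a, pEl a b, pEl a c} : Finset (NESet β)) := h ▸ by simp
    simp [sEl_injective.eq_iff, hab.symm, sEl_ne_pEl _ hab, sEl_ne_pEl _ hac] at this
  · intro h
    apply hne
    have hi : ∀ x y z : β, ({sEl x, sEl y, sEl z} : Finset (NESet β)) =
        ({x, y, z} : Finset β).image sEl := by simp [image_insert]
    rw [hi, hi] at h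
    exact image_injective sEl_injective h
  · intro h
    have : pEl a b ∈ ({sEl a, sEl d, sEl e} : Finset (NESet β)) := h ▸ by simp
    simp [(sEl_ne_pEl _ hab).symm] at this

lemma IsAut.three_le_card_filter (hT : IsPSTS T) (hN : 14 ≤ Fintype.card β)
    {G : Equiv.Perm (NESet β)} (hG : IsAut (CameronSTS T) G) {p : NESet β}
    (h : 3 ≤ ((addedTriples T).filter fun t => p ∈ t).card) :
    3 ≤ ((addedTriples T).filter fun t => G p ∈ t).card := by
  refine h.trans (card_le_card_of_injOn (fun t => t.image G) ?_
    (image_injective G.injective).injOn)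
  intro t ht
  obtain ⟨ht, hp⟩ := mem_filter.1 ht
  refine mem_filter.2 ⟨?_, mem_image_of_mem _ hp⟩
  obtain ⟨x, y, z, -, -, -, rfl⟩ := card_eq_three.1 (card_of_mem_addedTriples hT.1 ht)
  have := hG.mem_addedTriples hT hN ht
  simpa only [image_insert, image_singleton] using this

lemma IsAut.exists_apply_sEl (hT : IsPSTS T) (hN : 14 ≤ Fintype.card β)
    (h1 : ∀ a, ∃ t ∈ T, a ∈ t)
    (h2 : ∀ t ∈ T, ∃ b ∈ t, ∃ c ∈ t, b ≠ c ∧ (∃ s ∈ T, s ≠ t ∧ b ∈ s) ∧ ∃ s ∈ T, s ≠ t ∧ c ∈ s)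
    {G : Equiv.Perm (NESet β)} (hG : IsAut (CameronSTS T) G) (a : β) :
    ∃ b, G (sEl a) = sEl b := by
  have key : ∀ t ∈ T, ∀ b ∈ t, (∃ s ∈ T, s ≠ t ∧ b ∈ s) → ∃ b', G (sEl b) = sEl b' := by
    rintro t ht b hb ⟨s, hs, hne, hbs⟩
    exact exists_eq_sEl_of_three_le hT
      (hG.three_le_card_filter hT hN (three_le_card_filter_sEl hT hs ht hne hbs hb))
  obtain ⟨t, ht, ha⟩ := h1 a
  obtain ⟨b, hb, c, hc, hbc, hbs, hcs⟩ := h2 t ht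
  obtain ⟨b', hb'⟩ := key t ht b hb hbs
  obtain ⟨c', hc'⟩ := key t ht c hc hcs
  by_cases hab : a = b
  · exact ⟨b', by rw [hab, hb']⟩
  by_cases hac : a = c
  · exact ⟨c', by rw [hac, hc']⟩
  obtain ⟨d, hdb, hdc, rfl⟩ := exists_third (hT.1 t ht) hb hc hbc
  obtain rfl : a = d := by simpa [hab, hac] using ha
  have hadd := hG.mem_addedTriples hT hN (sEl_triple_mem_addedTriples ht)
  rw [hb', hc'] at hadd
  by_contra! hn
  obtain ⟨x, y, z, hxyz, -, he⟩ := addedTriples_normal_form hadd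
    (p := G (sEl a)) (by simp) hn
  have hne := ne_of_triple_mem hT.1 hxyz
  have aux : ∀ w : β, sEl w ∈ ({sEl x, pEl x y, pEl x z} : Finset (NESet β)) → w = x := by
    intro w hw
    simpa [sEl_injective.eq_iff, sEl_ne_pEl _ hne.1, sEl_ne_pEl _ hne.2.1] using hw
  have e1 := aux b' (he ▸ by simp)
  have e2 := aux c' (he ▸ by simp)
  rw [e1] at hb'
  rw [e2] at hc'
  exact hbc (sEl_injective (G.injective (hb'.trans hc'.symm)))

lemma sEl_triple_mem_cameronSTS_iff (hT : ∀ s ∈ T, s.card = 3) {a b c : β} (hab : a ≠ b)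
    (hac : a ≠ c) (hbc : b ≠ c) :
    ({sEl a, sEl b, sEl c} : Finset (NESet β)) ∈ CameronSTS T ↔
      ({a, b, c} : Finset β) ∈ T := by
  refine ⟨fun h => ?_, fun h => mem_union_right _ (sEl_triple_mem_addedTriples h)⟩
  rw [mem_cameronSTS_iff hT] at h
  rcases h with ⟨-, h, -⟩ | ⟨s, hs, -, -, -, -, h⟩
  · have : a ∈ (sEl c).1 := h ▸ by simp [sEl, mem_symmDiff, hab]
    simp [sEl, hac] at this
  · convert hs
    rw [← h]
    ext x
    simp only [sEl, mem_symmDiff, mem_insert, mem_singleton]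
    constructor
    · rintro (rfl | rfl | rfl) <;> simp_all [eq_comm]
    · tauto

/-- The action on nonempty subsets induced by a permutation of the points. -/
def imagePerm (β : Type*) : Equiv.Perm β →* Equiv.Perm (NESet β) where
  toFun g :=
    { toFun := fun p => ⟨p.1.image g, p.2.image g⟩
      invFun := fun p => ⟨p.1.image g.symm, p.2.image g.symm⟩
      left_inv := fun p => Subtype.ext (by simp [image_image])
      right_inv := fun p => Subtype.ext (by simp [image_image]) }
  map_one' := by
    ext1 p
    exact Subtype.ext (by simp)
  map_mul' g h := by
    ext1 p
    exact Subtype.ext (by simp [image_image])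

lemma imagePerm_apply_val (g : Equiv.Perm β) (p : NESet β) :
    (imagePerm β g p).1 = p.1.image g := rfl

lemma imagePerm_sEl (g : Equiv.Perm β) (a : β) : imagePerm β g (sEl a) = sEl (g a) :=
  Subtype.ext (by simp [imagePerm_apply_val, sEl])

lemma imagePerm_injective : Function.Injective (imagePerm β) := by
  intro g h e
  ext a
  have := congrArg (fun f => f (sEl a)) e
  simp only [imagePerm_sEl] at this
  exact sEl_injective this

lemma IsAut.imagePerm (hT : ∀ s ∈ T, s.card = 3) {g : Equiv.Perm β} (hg : IsAut T g) :
    IsAut (CameronSTS T) (imagePerm β g) := by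
  refine isAut_of_triple_mem_iff (fun t ht => card_of_mem_cameronSTS hT ht)
    fun p q r _ _ _ => ?_
  have hex : ∀ P : Finset β → Prop, (∃ s ∈ T, P s) ↔ ∃ s ∈ T, P (s.image g) := by
    intro P
    constructor
    · rintro ⟨s, hs, h⟩
      refine ⟨s.image g.symm, (hg _).2 ?_, ?_⟩ <;> simpa [image_image]
    · rintro ⟨s, hs, h⟩
      exact ⟨_, (hg s).1 hs, h⟩
  have hss : ∀ s t : Finset β, s.image g ⊂ t.image g ↔ s ⊂ t := fun s t =>
    image_ssubset_image g.injective
  rw [mem_cameronSTS_iff hT, mem_cameronSTS_iff hT,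
    hex fun s => (_root_.imagePerm β g p).1 ⊂ s ∧ (_root_.imagePerm β g q).1 ⊂ s ∧
      (_root_.imagePerm β g r).1 ⊂ s,
    hex fun s => (_root_.imagePerm β g p).1 ⊂ s ∧ (_root_.imagePerm β g q).1 ⊂ s ∧
      (_root_.imagePerm β g r).1 ⊂ s ∧ _root_.imagePerm β g p ≠ _root_.imagePerm β g q ∧ _]
  simp only [imagePerm_apply_val, ← image_symmDiff _ _ g.injective, hss,
    (image_injective g.injective).eq_iff, (_root_.imagePerm β g).injective.ne_iff]

lemma IsAut.eq_one_of_fixes_sEl (hT : IsPSTS T)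
    (h4 : ∀ a b : β, a ≠ b → ∃ d, d ≠ a ∧ d ≠ b ∧ ∀ t ∈ T, a ∈ t → d ∉ t)
    {G : Equiv.Perm (NESet β)} (hG : IsAut (CameronSTS T) G) (h : ∀ a, G (sEl a) = sEl a) :
    G = 1 := by
  have third : ∀ {p q r : NESet β}, ({p, q, r} : Finset (NESet β)) ∈ CameronSTS T →
      G p = p → G q = q → G r = r := by
    intro p q r hpqr hp hq
    have := (hG.triple_mem_iff p q r).1 hpqr
    rw [hp, hq] at this
    exact cameronSTS_third_unique hT this hpqr
  have pair : ∀ a b : β, a ≠ b → G (pEl a b) = pEl a b := by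
    intro a b hab
    obtain ⟨d, hda, hdb, hd⟩ := h4 a b hab
    have hc : ({a, b, d} : Finset β).card = 3 :=
      card_eq_three.2 ⟨a, b, d, hab, hda.symm, hdb.symm, rfl⟩
    have e1 : G (pEl a d) = pEl a d := by
      refine third (p := sEl a) (q := sEl d) ?_ (h a) (h d)
      rw [mem_cameronSTS_iff hT.1]
      refine Or.inl ⟨fun e => hda (sEl_injective e).symm, ?_, ?_⟩
      · ext x
        simp only [sEl, pEl, mem_symmDiff, mem_insert, mem_singleton]
        constructor
        · tauto
        · rintro (rfl | rfl) <;> simp [hda, hda.symm]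
      · rintro ⟨s, hs, ha, hd', -⟩
        exact hd s hs (ha.1 (by simp [sEl])) (hd'.1 (by simp [sEl]))
    have e2 : G ⟨{a, b, d}, by simp⟩ = ⟨{a, b, d}, by simp⟩ := by
      refine third (p := pEl a d) (q := sEl b) ?_ e1 (h b)
      rw [insert_comm, pair_comm, insert_comm, mem_cameronSTS_iff_of_large hT.1 hc.ge]
      refine ⟨fun e => ?_, ?_⟩
      · have := congrArg (fun p : NESet β => p.1.card) e
        simp only [hc] at this
        simp [sEl] at this
      · ext x
        simp only [sEl, pEl, mem_symmDiff, mem_insert, mem_singleton]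
        by_cases hx : x = b
        · simp [hx, hab.symm, hdb.symm]
        · simp [hx]
    refine third (p := ⟨{a, b, d}, by simp⟩) (q := sEl d) ?_ e2 (h d)
    rw [mem_cameronSTS_iff_of_large hT.1 hc.ge]
    refine ⟨fun e => ?_, ?_⟩
    · have := congrArg (fun p : NESet β => p.1.card) e
      simp only [hc] at this
      simp [sEl] at this
    · ext x
      simp only [sEl, pEl, mem_symmDiff, mem_insert, mem_singleton]
      by_cases hx : x = d
      · simp [hx, hda, hdb]
      · simp [hx]
  have large : ∀ n, ∀ p : NESet β, p.1.card = n + 1 → G p = p := by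
    intro n
    induction n with
    | zero =>
      intro p hp
      obtain ⟨a, ha⟩ := card_eq_one.1 hp
      obtain rfl : p = sEl a := Subtype.ext ha
      exact h a
    | succ n ih =>
      intro p hp
      rcases Nat.eq_zero_or_pos n with rfl | hn
      · obtain ⟨a, b, hab, he⟩ := card_eq_two.1 hp
        obtain rfl : p = pEl a b := Subtype.ext he
        exact pair a b hab
      obtain ⟨x, hx⟩ := p.2
      have hcard : (p.1.erase x).card = n + 1 := by rw [card_erase_of_mem hx, hp]; omega
      refine third (p := ⟨p.1.erase x, card_pos.1 (by omega)⟩) (q := sEl x) ?_ (ih _ hcard) (h x)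
      rw [insert_comm, pair_comm, insert_comm, mem_cameronSTS_iff_of_large hT.1 (by omega)]
      refine ⟨fun e => ?_, ?_⟩
      · have := congrArg (fun p : NESet β => p.1.card) e
        simp only [hp] at this
        simp [sEl] at this
      · ext y
        simp only [sEl, mem_symmDiff, mem_erase, mem_singleton]
        by_cases hy : y = x
        · simp [hy, hx]
        · simp [hy]
  ext1 p
  have := card_pos.2 p.2
  exact large (p.1.card - 1) p (by omega)

/-- Under mild conditions on the partial system, Cameron's construction does not change the
automorphism group. -/
theorem nonempty_autGroup_cameronSTS_mulEquiv (hT : IsPSTS T) (hN : 14 ≤ Fintype.card β)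
    (h1 : ∀ a, ∃ t ∈ T, a ∈ t)
    (h2 : ∀ t ∈ T, ∃ b ∈ t, ∃ c ∈ t, b ≠ c ∧ (∃ s ∈ T, s ≠ t ∧ b ∈ s) ∧ ∃ s ∈ T, s ≠ t ∧ c ∈ s)
    (h4 : ∀ a b : β, a ≠ b → ∃ d, d ≠ a ∧ d ≠ b ∧ ∀ t ∈ T, a ∈ t → d ∉ t) :
    Nonempty (autGroup (CameronSTS T) ≃* autGroup T) := by
  let φ : autGroup T →* autGroup (CameronSTS T) :=
    ((imagePerm β).comp (autGroup T).subtype).codRestrict _ fun g => g.2.imagePerm hT.1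
  refine ⟨(MulEquiv.ofBijective φ ⟨fun g g' e => ?_, fun G => ?_⟩).symm⟩
  · exact Subtype.ext (imagePerm_injective (congrArg Subtype.val e))
  · choose f hf using IsAut.exists_apply_sEl hT hN h1 h2 G.2
    have hfi : Function.Injective f := by
      intro a b e
      apply sEl_injective
      apply G.1.injective
      rw [hf, hf, e]
    let g : Equiv.Perm β := Equiv.ofBijective f (Finite.injective_iff_bijective.1 hfi)
    have hg : IsAut T g := by
      refine isAut_of_triple_mem_iff hT.1 fun a b c hab hac hbc => ?_
      show _ ↔ ({f a, f b, f c} : Finset β) ∈ T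
      rw [← sEl_triple_mem_cameronSTS_iff hT.1 hab hac hbc,
        ← sEl_triple_mem_cameronSTS_iff hT.1 (hfi.ne hab) (hfi.ne hac) (hfi.ne hbc),
        IsAut.triple_mem_iff G.2, hf, hf, hf]
    refine ⟨⟨g, hg⟩, Subtype.ext ?_⟩
    have hone : (imagePerm β g)⁻¹ * G.1 = 1 := by
      refine IsAut.eq_one_of_fixes_sEl hT h4
        ((autGroup _).mul_mem (IsAut.inv (hg.imagePerm hT.1)) G.2) fun a => ?_
      rw [Equiv.Perm.mul_apply, hf, Equiv.Perm.inv_eq_iff_eq, imagePerm_sEl]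
      rfl
    exact (inv_mul_eq_one.1 hone)

end Cameron

section Cycle

lemma exists_zmod_of_periodic {X : Type*} {m : ℕ} [NeZero m] {f : ℕ → X}
    (hf : Function.Periodic f m) : ∃ F : ZMod m → X, ∀ i : ℕ, F i = f i :=
  ⟨fun i => f i.val, fun i => by
    show f (i : ZMod m).val = f i
    rw [ZMod.val_natCast, hf.map_mod_nat]⟩

/-- A nonbacktracking walk in a graph all of whose vertices have two neighbours. -/
lemma exists_nonbacktracking_walk {X : Type*} (C : Finset X) (adj : X → X → Prop)
    (hsymm : ∀ s t, adj s t → adj t s)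
    (hreg : ∀ t ∈ C, (C.filter (adj t)).card = 2) {t₀ t₁ : X} (h₀ : t₀ ∈ C) (h₁ : t₁ ∈ C)
    (h₀₁ : adj t₀ t₁) :
    ∃ t : ℕ → X, t 0 = t₀ ∧ t 1 = t₁ ∧ (∀ i, t i ∈ C) ∧ (∀ i, adj (t i) (t (i + 1))) ∧
      (∀ i, t i ≠ t (i + 2)) ∧ ∀ i, ∀ u ∈ C, adj (t (i + 1)) u → u = t i ∨ u = t (i + 2) := by
  have hnext : ∀ s t : X, ∃ u, s ∈ C → t ∈ C → adj s t →
      u ∈ C ∧ adj t u ∧ s ≠ u ∧ ∀ v ∈ C, adj t v → v = s ∨ v = u := by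
    intro s t
    by_cases h : s ∈ C ∧ t ∈ C ∧ adj s t
    · obtain ⟨hs, ht, hst⟩ := h
      obtain ⟨x, y, hxy, he⟩ := card_eq_two.1 (hreg t ht)
      have hmem : ∀ v, (v ∈ C ∧ adj t v) ↔ v = x ∨ v = y := by
        intro v
        rw [← mem_filter, he, mem_insert, mem_singleton]
      rcases (hmem s).1 ⟨hs, hsymm _ _ hst⟩ with rfl | rfl
      · obtain ⟨h1, h2⟩ := (hmem y).2 (Or.inr rfl)
        exact ⟨y, fun _ _ _ => ⟨h1, h2, hxy, fun v h h' => (hmem v).1 ⟨h, h'⟩⟩⟩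
      · obtain ⟨h1, h2⟩ := (hmem x).2 (Or.inl rfl)
        exact ⟨x, fun _ _ _ => ⟨h1, h2, hxy.symm, fun v h h' => ((hmem v).1 ⟨h, h'⟩).symm⟩⟩
    · exact ⟨s, fun a b c => absurd ⟨a, b, c⟩ h⟩
  choose nxt hnxt using hnext
  let st : ℕ → X × X := fun i => Nat.rec (t₀, t₁) (fun _ q => (q.2, nxt q.1 q.2)) i
  have hst : ∀ i, (st i).1 ∈ C ∧ (st i).2 ∈ C ∧ adj (st i).1 (st i).2 := by
    intro i
    induction i with
    | zero => exact ⟨h₀, h₁, h₀₁⟩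
    | succ i ih =>
      have := hnxt _ _ ih.1 ih.2.1 ih.2.2
      exact ⟨ih.2.1, this.1, this.2.1⟩
  exact ⟨fun i => (st i).1, rfl, rfl, fun i => (hst i).1, fun i => (hst i).2.2,
    fun i => (hnxt _ _ (hst i).1 (hst i).2.1 (hst i).2.2).2.2.1,
    fun i => (hnxt _ _ (hst i).1 (hst i).2.1 (hst i).2.2).2.2.2⟩

/-- A finite connected graph all of whose vertices have two neighbours is a cycle. -/
lemma exists_cyclic_enumeration {X : Type*} (C : Finset X) (adj : X → X → Prop)
    (hirr : ∀ t, ¬ adj t t) (hsymm : ∀ s t, adj s t → adj t s)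
    (hreg : ∀ t ∈ C, (C.filter (adj t)).card = 2)
    (hconn : ∀ t ∈ C, ∀ s ∈ C,
      Relation.ReflTransGen (fun t s => t ∈ C ∧ s ∈ C ∧ adj t s) t s)
    {t₀ t₁ : X} (h₀ : t₀ ∈ C) (h₁ : t₁ ∈ C) (h₀₁ : adj t₀ t₁) :
    ∃ m : ℕ, 3 ≤ m ∧ ∃ t : ZMod m → X, Function.Injective t ∧ (∀ u, u ∈ C ↔ ∃ i, t i = u) ∧
      t 0 = t₀ ∧ t 1 = t₁ ∧ ∀ i j, adj (t i) (t j) ↔ j = i + 1 ∨ j = i - 1 := by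
  obtain ⟨t, ht0, ht1, htC, hadj, hne, hnb⟩ :=
    exists_nonbacktracking_walk C adj hsymm hreg h₀ h₁ h₀₁
  have hex : ∃ m, ∃ i < m, t i = t m := by
    by_contra! h
    refine not_injective_infinite_finite (fun i : ℕ => (⟨t i, htC i⟩ : C)) fun i j hij => ?_
    have hij : t i = t j := congrArg Subtype.val hij
    rcases lt_trichotomy i j with hlt | rfl | hlt
    · exact absurd hij (h _ _ hlt)
    · rfl
    · exact absurd hij.symm (h _ _ hlt)
  obtain ⟨m, ⟨i, him, hi⟩, hmin⟩ : ∃ m, (∃ i < m, t i = t m) ∧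
      ∀ m' < m, ∀ i < m', t i ≠ t m' := by
    refine ⟨Nat.find hex, Nat.find_spec hex, fun m' hm' i hi e => ?_⟩
    exact Nat.find_min hex hm' ⟨i, hi, e⟩
  have hi0 : i = 0 := by
    by_contra hi0
    obtain ⟨i, rfl⟩ := Nat.exists_eq_succ_of_ne_zero hi0
    obtain ⟨m, rfl⟩ : ∃ k, m = k + 1 := ⟨m - 1, by omega⟩
    have h1 : adj (t (i + 1)) (t m) := by
      rw [show t (i + 1) = t (m + 1) from hi]
      exact hsymm _ _ (hadj m)
    rcases hnb i _ (htC m) h1 with h | h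
    · exact hmin m (by omega) i (by omega) h.symm
    · rcases lt_trichotomy (i + 2) m with hlt | heq | hlt
      · exact hmin m (by omega) (i + 2) hlt h.symm
      · subst heq
        exact hne (i + 1) hi
      · obtain rfl : m = i + 1 := by omega
        have := hadj (i + 1)
        rw [← h] at this
        exact hirr _ this
  subst hi0
  have hinj : ∀ i j, i < m → j < m → t i = t j → i = j := by
    intro i j hi hj e
    rcases lt_trichotomy i j with hlt | rfl | hlt
    · exact absurd e (hmin _ hj _ hlt)
    · rfl
    · exact absurd e.symm (hmin _ hi _ hlt)
  have hm3 : 3 ≤ m := by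
    by_contra h
    have : m = 1 ∨ m = 2 := by omega
    rcases this with rfl | rfl
    · have := hadj 0
      rw [hi] at this
      exact hirr _ this
    · exact hne 0 hi
  obtain ⟨m, rfl⟩ : ∃ k, m = k + 1 := ⟨m - 1, by omega⟩
  have hm1 : t (m + 2) = t 1 := by
    have h1 : adj (t (m + 1)) (t 1) := hi ▸ hadj 0
    rcases hnb m _ (htC 1) h1 with h | h
    · have := hinj 1 m (by omega) (by omega) h
      omega
    · exact h.symm
  have hper : Function.Periodic t (m + 1) := by
    have : ∀ i, t (i + (m + 1)) = t i ∧ t (i + 1 + (m + 1)) = t (i + 1) := by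
      intro i
      induction i with
      | zero =>
        refine ⟨by rw [zero_add, hi], ?_⟩
        rw [show 0 + 1 + (m + 1) = m + 2 by omega, hm1]
      | succ i ih =>
        refine ⟨ih.2, ?_⟩
        have h1 : adj (t (i + (m + 1) + 1)) (t (i + 2)) := by
          rw [show i + (m + 1) + 1 = i + 1 + (m + 1) by omega, ih.2]
          exact hadj (i + 1)
        rcases hnb _ _ (htC _) h1 with h | h
        · exact absurd (ih.1.symm.trans h.symm) (hne i)
        · rw [show i + 1 + 1 + (m + 1) = i + (m + 1) + 2 by omega, ← h]
    exact fun i => (this i).1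
  obtain ⟨F, hF⟩ := exists_zmod_of_periodic hper
  have hcast : ∀ i : ZMod (m + 1), ((i.val : ℕ) : ZMod (m + 1)) = i := fun i =>
    ZMod.natCast_zmod_val i
  have hFv : ∀ i : ZMod (m + 1), F i = t i.val := fun i => by rw [← hF, hcast]
  have hFinj : Function.Injective F := by
    intro i j e
    rw [hFv, hFv] at e
    exact ZMod.val_injective _ (hinj _ _ (ZMod.val_lt i) (ZMod.val_lt j) e)
  have hFadj : ∀ i, adj (F i) (F (i + 1)) := by
    intro i
    have h1 := hF (i.val + 1)
    rw [Nat.cast_add, hcast, Nat.cast_one] at h1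
    rw [h1, hFv]
    exact hadj _
  have hFnb : ∀ i, ∀ u ∈ C, adj (F i) u → u = F (i + 1) ∨ u = F (i - 1) := by
    intro i u hu hiu
    have h0 := hF ((i - 1).val)
    have h1 := hF ((i - 1).val + 1)
    have h2 := hF ((i - 1).val + 2)
    rw [Nat.cast_add, hcast] at h1 h2
    rw [hcast] at h0
    rw [Nat.cast_one, sub_add_cancel] at h1
    rw [h1] at hiu
    rcases hnb _ _ hu hiu with h | h
    · exact Or.inr (h.trans h0.symm)
    · left
      rw [h, ← h2]
      congr 1
      push_cast
      ring
  refine ⟨m + 1, hm3, F, hFinj, fun u => ⟨fun hu => ?_, ?_⟩, ?_, ?_, fun i j => ⟨fun h => ?_, ?_⟩⟩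
  · have := hconn t₀ h₀ u hu
    induction this with
    | refl => exact ⟨0, by have := hF 0; rw [Nat.cast_zero] at this; rw [this, ht0]⟩
    | tail _ hst ih =>
      obtain ⟨i, rfl⟩ := ih hst.1
      rcases hFnb i _ hst.2.1 hst.2.2 with h | h
      · exact ⟨_, h.symm⟩
      · exact ⟨_, h.symm⟩
  · rintro ⟨i, rfl⟩
    rw [hFv]
    exact htC _
  · have := hF 0
    rw [Nat.cast_zero] at this
    rw [this, ht0]
  · have := hF 1
    rw [Nat.cast_one] at this
    rw [this, ht1]
  · rcases hFnb i (F j) (by rw [hFv]; exact htC _) h with h | h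
    · exact Or.inl (hFinj h)
    · exact Or.inr (hFinj h)
  · rintro (rfl | rfl)
    · exact hFadj i
    · have := hFadj (i - 1)
      rw [sub_add_cancel] at this
      exact hsymm _ _ this

end Cycle

section CyclicPSTS
variable {β : Type*} [Fintype β] {C : Finset (Finset β)}

lemma mem_ptsOf {x : β} : x ∈ ptsOf C ↔ ∃ t ∈ C, x ∈ t := by
  simp [ptsOf, mem_sup]

lemma zmod_natCast_ne_zero {m k : ℕ} (hk : 0 < k) (hkm : k < m) : ((k : ℕ) : ZMod m) ≠ 0 := by
  rw [Ne, ZMod.natCast_eq_zero_iff]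
  exact Nat.not_dvd_of_pos_of_lt hk hkm

lemma IsCyclicPSTS.exists_enumeration (hcyc : IsCyclicPSTS C) {t₀ t₁ : Finset β} (h₀ : t₀ ∈ C)
    (h₁ : t₁ ∈ C) (hne : t₁ ≠ t₀) (hmeet : (t₁ ∩ t₀).Nonempty) :
    ∃ m : ℕ, 3 ≤ m ∧ ∃ t : ZMod m → Finset β, Function.Injective t ∧
      (∀ u, u ∈ C ↔ ∃ i, t i = u) ∧ t (-1) = t₀ ∧ t 0 = t₁ ∧
      (∀ i, (t i ∩ t (i + 1)).Nonempty) ∧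
      ∀ i j, (t i ∩ t j).Nonempty → j = i ∨ j = i + 1 ∨ j = i - 1 := by
  obtain ⟨m, hm, t, hinj, hmem, ht0, ht1, hadj⟩ := exists_cyclic_enumeration C
    (fun t s => s ≠ t ∧ (s ∩ t).Nonempty) (fun t h => h.1 rfl)
    (fun s t h => ⟨h.1.symm, inter_comm s t ▸ h.2⟩) (fun t ht => by convert hcyc.2.1 t ht)
    (fun t ht s hs => Relation.ReflTransGen.mono (fun a b h =>
      ⟨h.1, h.2.1, h.2.2.1.symm, inter_comm a b ▸ h.2.2.2⟩) _ _ (hcyc.2.2 t ht s hs)) h₀ h₁ ⟨hne, hmeet⟩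
  refine ⟨m, hm, fun i => t (i + 1), fun i j e => add_right_cancel (hinj e), fun u => ?_,
    by simpa using ht0, by simpa using ht1,
    fun i => ?_, fun i j h => ?_⟩
  · rw [hmem]
    exact ⟨fun ⟨i, h⟩ => ⟨i - 1, by simpa using h⟩, fun ⟨i, h⟩ => ⟨i + 1, h⟩⟩
  · rw [inter_comm]
    exact ((hadj (i + 1) (i + 1 + 1)).2 (Or.inl rfl)).2
  · by_cases hij : j = i
    · exact Or.inl hij
    · right
      have := (hadj (i + 1) (j + 1)).1
        ⟨fun e => hij (add_right_cancel (hinj e)), inter_comm (t (i + 1)) _ ▸ h⟩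
      rcases this with h | h
      · exact Or.inl (add_right_cancel h)
      · refine Or.inr ?_
        rw [eq_sub_iff_add_eq, h]
        ring

/-- A cyclic PSTS with an even number of points is a cycle of triples `{p i, p (i+1), w i}`. -/
theorem IsCyclicPSTS.exists_param (hC : IsPSTS C) (hcyc : IsCyclicPSTS C)
    (heven : Even (ptsOf C).card) {z z' z₁ : β} (hz : ({z, z', z₁} : Finset β) ∈ C)
    (hzd : (C.filter fun t => z ∈ t).card = 2) (hzd' : (C.filter fun t => z' ∈ t).card = 2) :
    ∃ m : ℕ, 3 ≤ m ∧ (ptsOf C).card = 2 * m ∧ ∃ p w : ZMod m → β,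
      Function.Injective p ∧ Function.Injective w ∧ (∀ i j, p i ≠ w j) ∧
      (∀ s, s ∈ C ↔ ∃ i, s = {p i, p (i + 1), w i}) ∧ p 0 = z ∧ p (-1) = z' := by
  have hzz' := (ne_of_triple_mem hC.1 hz).1
  obtain ⟨t₁, ht₁, hne⟩ := exists_mem_ne (by rw [hzd]; norm_num) ({z, z', z₁} : Finset β)
  obtain ⟨ht₁, hzt₁⟩ := mem_filter.1 ht₁
  obtain ⟨m, hm, t, hinj, hmem, htm1, ht0, hnext, hadj⟩ := hcyc.exists_enumeration hz ht₁ hne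
    ⟨z, mem_inter.2 ⟨hzt₁, by simp⟩⟩
  have : NeZero m := ⟨by omega⟩
  have h1 : (1 : ZMod m) ≠ 0 := by
    simpa using zmod_natCast_ne_zero (m := m) (k := 1) (by norm_num) (by omega)
  have h2 : (2 : ZMod m) ≠ 0 := by
    simpa using zmod_natCast_ne_zero (m := m) (k := 2) (by norm_num) (by omega)
  have htC : ∀ i, t i ∈ C := fun i => (hmem _).2 ⟨i, rfl⟩
  have hcard : ∀ i, (t i).card = 3 := fun i => hC.1 _ (htC i)
  have huniq : ∀ {x y : β} {i j}, x ∈ t i → x ∈ t j → y ∈ t i → y ∈ t j → i ≠ j → x = y := by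
    intro x y i j hxi hxj hyi hyj hij
    by_contra hxy
    exact hij (hinj (hC.2 x y hxy _ (htC i) _ (htC j) hxi hyi hxj hyj))
  have hadj' : ∀ {x i j}, x ∈ t i → x ∈ t j → i ≠ j → j = i + 1 ∨ j = i - 1 := by
    intro x i j hi hj hij
    exact (hadj i j ⟨x, mem_inter.2 ⟨hi, hj⟩⟩).resolve_left hij.symm
  have hconc : ∀ {x i j k}, x ∈ t i → x ∈ t j → x ∈ t k → i ≠ j → i ≠ k → j = k := by
    intro x i j k hi hj hk hij hik
    by_contra hjk
    have h3 : (3 : ZMod m) = 0 := by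
      rcases hadj' hi hj hij with rfl | rfl <;> rcases hadj' hi hk hik with rfl | rfl
      · exact absurd rfl hjk
      · rcases hadj' hj hk hjk with e | e
        · linear_combination -e
        · exact absurd (by linear_combination -e) h1
      · rcases hadj' hj hk hjk with e | e
        · exact absurd (by linear_combination e) h1
        · linear_combination e
      · exact absurd rfl hjk
    have hm3 : m = 3 := by
      have : ((3 : ℕ) : ZMod m) = 0 := by simpa using h3
      rw [ZMod.natCast_eq_zero_iff] at this
      exact le_antisymm (Nat.le_of_dvd (by norm_num) this) hm
    subst hm3
    have hall : ∀ l, x ∈ t l := by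
      intro l
      have : ∀ i j k l : ZMod 3, i ≠ j → i ≠ k → j ≠ k → l = i ∨ l = j ∨ l = k := by decide
      rcases this i j k l hij hik hjk with rfl | rfl | rfl <;> assumption
    have hpts : (ptsOf C).erase x = univ.biUnion fun l : ZMod 3 => (t l).erase x := by
      ext y
      simp only [mem_erase, mem_ptsOf, hmem, mem_biUnion, mem_univ, true_and]
      constructor
      · rintro ⟨hy, _, ⟨l, rfl⟩, hl⟩
        exact ⟨l, hy, hl⟩
      · rintro ⟨l, hy, hl⟩
        exact ⟨hy, _, ⟨l, rfl⟩, hl⟩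
    have hc : ((ptsOf C).erase x).card = 6 := by
      rw [hpts, card_biUnion]
      · rw [sum_congr rfl fun l _ => by rw [card_erase_of_mem (hall l), hcard l]]
        simp
      · intro a _ b _ hab
        rw [Function.onFun, disjoint_left]
        intro y hy hy'
        exact (mem_erase.1 hy).1 (huniq (mem_erase.1 hy).2 (mem_erase.1 hy').2 (hall a) (hall b) hab)
    rw [card_erase_of_mem (mem_ptsOf.2 ⟨_, htC i, hi⟩)] at hc
    obtain ⟨r, hr⟩ := heven
    omega
  have hpex : ∀ i, ∃ x, x ∈ t (i - 1) ∧ x ∈ t i := by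
    intro i
    obtain ⟨x, hx⟩ := hnext (i - 1)
    rw [sub_add_cancel, mem_inter] at hx
    exact ⟨x, hx⟩
  choose p hp' hp using hpex
  have hpmem : ∀ {i j}, p i ∈ t j ↔ j = i ∨ j = i - 1 := by
    intro i j
    constructor
    · intro h
      by_cases hij : i = j
      · exact Or.inl hij.symm
      · exact Or.inr (hconc (hp i) h (hp' i) hij (fun e => h1 (by linear_combination e)))
    · rintro (rfl | rfl)
      exacts [hp _, hp' _]
  have hpinj : Function.Injective p := by
    intro i j e
    have a1 : i = j ∨ i = j - 1 := hpmem.1 (e ▸ hp i)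
    have a2 : i - 1 = j ∨ i - 1 = j - 1 := hpmem.1 (e ▸ hp' i)
    rcases a1 with a1 | a1
    · exact a1
    rcases a2 with a2 | a2
    · exact absurd (by linear_combination a1 - a2) h2
    · linear_combination a2
  have hp1 : ∀ i, p (i + 1) ∈ t i := fun i => hpmem.2 (Or.inr (by ring))
  have hpne : ∀ i, p i ≠ p (i + 1) := fun i e => h1 (by linear_combination -hpinj e)
  have hwex : ∀ i, ∃ x, x ≠ p i ∧ x ≠ p (i + 1) ∧ t i = {p i, p (i + 1), x} := fun i =>
    exists_third (hcard i) (hp i) (hp1 i) (hpne i)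
  choose w hw hw' ht using hwex
  have hwt : ∀ i, w i ∈ t i := fun i => by rw [ht]; simp
  have hwmem : ∀ {i j}, w i ∈ t j → j = i := by
    intro i j h
    by_contra hij
    rcases hadj' (hwt i) h (Ne.symm hij) with rfl | rfl
    · exact hw' i (huniq (hwt i) h (hp1 i) (hp _) (Ne.symm hij))
    · exact hw i (huniq (hwt i) h (hp i) (hp' _) (Ne.symm hij))
  have hwinj : Function.Injective w := fun i j e => hwmem (e ▸ hwt i)
  have hpw : ∀ i j, p i ≠ w j := by
    intro i j e
    have a1 := hwmem (e ▸ hp i)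
    have a2 := hwmem (e ▸ hp' i)
    exact h1 (by linear_combination a1 - a2)
  have hp0 : p 0 = z := by
    refine huniq (i := -1) (j := 0) (hpmem.2 (Or.inr (by ring))) (hp 0) ?_ ?_ ?_
    · rw [htm1]; simp
    · rw [ht0]; exact hzt₁
    · exact fun e => h1 (by linear_combination -e)
  have hpm1 : p (-1) = z' := by
    obtain ⟨s, hs, hne'⟩ := exists_mem_ne (by rw [hzd']; norm_num) ({z, z', z₁} : Finset β)
    obtain ⟨hs, hzs⟩ := mem_filter.1 hs
    obtain ⟨j, rfl⟩ := (hmem s).1 hs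
    have hz'm : z' ∈ t (-1) := by rw [htm1]; simp
    have hj : (-1 : ZMod m) ≠ j := by
      rintro rfl
      exact hne' htm1
    rcases hadj' hz'm hzs hj with rfl | rfl
    · refine absurd (huniq (i := -1) (j := 0) (x := z) (y := z') ?_ ?_ hz'm ?_ ?_) hzz'
      · rw [htm1]; simp
      · rw [ht0]; exact hzt₁
      · simpa using hzs
      · exact fun e => h1 (by linear_combination -e)
    · exact huniq (hp _) (hp' _) hz'm hzs hj
  have hCiff : ∀ s, s ∈ C ↔ ∃ i, s = {p i, p (i + 1), w i} := by
    intro s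
    rw [hmem]
    exact exists_congr fun i => by rw [ht, eq_comm]
  refine ⟨m, hm, ?_, p, w, hpinj, hwinj, hpw, hCiff, hp0, hpm1⟩
  have hpts : ptsOf C = univ.image p ∪ univ.image w := by
    ext x
    simp only [mem_ptsOf, hCiff, mem_union, mem_image, mem_univ, true_and]
    constructor
    · rintro ⟨s, ⟨i, rfl⟩, hx⟩
      simp only [mem_insert, mem_singleton] at hx
      rcases hx with rfl | rfl | rfl
      exacts [Or.inl ⟨_, rfl⟩, Or.inl ⟨_, rfl⟩, Or.inr ⟨_, rfl⟩]
    · rintro (⟨i, rfl⟩ | ⟨i, rfl⟩)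
      · exact ⟨_, ⟨i, rfl⟩, by simp⟩
      · exact ⟨_, ⟨i, rfl⟩, by simp⟩
  have hdisj : Disjoint (univ.image p) (univ.image w) := by
    simp only [disjoint_left, mem_image, mem_univ, true_and]
    rintro _ ⟨i, rfl⟩ ⟨j, e⟩
    exact hpw i j e.symm
  rw [hpts, card_union_of_disjoint hdisj, card_image_of_injective _ hpinj,
    card_image_of_injective _ hwinj, card_univ, ZMod.card]
  ring

end CyclicPSTS

section QParam
variable {β : Type*} [Fintype β]

lemma natCast_zmod_eq {m k k' : ℕ} (hk : k ≤ m) (hk' : k' ≤ m)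
    (h : (k : ZMod m) = k') : k = k' ∨ ((k = 0 ∨ k = m) ∧ (k' = 0 ∨ k' = m)) := by
  rw [ZMod.natCast_eq_natCast_iff'] at h
  rcases hk.lt_or_eq with hk | rfl <;> rcases hk'.lt_or_eq with hk' | rfl
  · rw [Nat.mod_eq_of_lt hk, Nat.mod_eq_of_lt hk'] at h
    exact Or.inl h
  · rw [Nat.mod_eq_of_lt hk, Nat.mod_self] at h
    exact Or.inr ⟨Or.inl h, Or.inr rfl⟩
  · rw [Nat.mod_eq_of_lt hk', Nat.mod_self] at h
    exact Or.inr ⟨Or.inr rfl, Or.inl h.symm⟩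
  · exact Or.inl rfl

/-- The cycle of triples `{p k, p (k+1), w k}`, `k < m`, where `p m = p 0`. -/
structure IsTripleCycle (C : Finset (Finset β)) (m : ℕ) (p w : ℕ → β) : Prop where
  p_last : p m = p 0
  p_eq : ∀ {k k'}, k ≤ m → k' ≤ m → p k = p k' →
    k = k' ∨ ((k = 0 ∨ k = m) ∧ (k' = 0 ∨ k' = m))
  w_eq : ∀ {k k'}, k < m → k' < m → w k = w k' → k = k'
  p_ne_w : ∀ k k', p k ≠ w k'
  mem_iff : ∀ s, s ∈ C ↔ ∃ k < m, s = {p k, p (k + 1), w k}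
  mem_pts : ∀ x, x ∈ ptsOf C ↔ (∃ k < m, x = p k) ∨ ∃ k < m, x = w k
  p_mem : ∀ k, p k ∈ ptsOf C
  w_mem : ∀ k, w k ∈ ptsOf C

lemma IsCyclicPSTS.exists_isTripleCycle {C : Finset (Finset β)} (hC : IsPSTS C)
    (hcyc : IsCyclicPSTS C) {m : ℕ} (hm : (ptsOf C).card = 2 * m) {z z' z₁ : β}
    (hz : ({z, z', z₁} : Finset β) ∈ C)
    (hzd : (C.filter fun t => z ∈ t).card = 2) (hzd' : (C.filter fun t => z' ∈ t).card = 2) :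
    ∃ p w : ℕ → β, IsTripleCycle C m p w ∧ p 0 = z ∧ p (m - 1) = z' := by
  obtain ⟨m', hm3, hm', p, w, hp, hw, hpw, hmem, hp0, hpm⟩ :=
    hcyc.exists_param hC (hm ▸ even_two_mul m) hz hzd hzd'
  obtain rfl : m = m' := by omega
  have : NeZero m := ⟨by omega⟩
  have hmem' : ∀ s, s ∈ C ↔ ∃ k < m, s = {p k, p ((k + 1 : ℕ) : ZMod m), w k} := by
    intro s
    rw [hmem]
    constructor
    · rintro ⟨i, rfl⟩
      exact ⟨i.val, ZMod.val_lt i, by simp [ZMod.natCast_zmod_val]⟩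
    · rintro ⟨k, -, rfl⟩
      exact ⟨k, by simp⟩
  have hpts : ∀ x, x ∈ ptsOf C ↔ (∃ i, x = p i) ∨ ∃ i, x = w i := by
    intro x
    simp only [mem_ptsOf, hmem]
    constructor
    · rintro ⟨_, ⟨i, rfl⟩, hx⟩
      simp only [mem_insert, mem_singleton] at hx
      rcases hx with hx | hx | hx
      exacts [Or.inl ⟨_, hx⟩, Or.inl ⟨_, hx⟩, Or.inr ⟨_, hx⟩]
    · rintro (⟨i, rfl⟩ | ⟨i, rfl⟩)
      · exact ⟨_, ⟨i, rfl⟩, by simp⟩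
      · exact ⟨_, ⟨i, rfl⟩, by simp⟩
  have hex : ∀ (f : ZMod m → β) (x : β), (∃ i, x = f i) ↔ ∃ k < m, x = f (k : ℕ) := by
    intro f x
    constructor
    · rintro ⟨i, rfl⟩
      exact ⟨i.val, ZMod.val_lt i, by rw [ZMod.natCast_zmod_val]⟩
    · rintro ⟨k, -, rfl⟩
      exact ⟨_, rfl⟩
  refine ⟨fun k => p k, fun k => w k, ⟨by simp, ?_, ?_, fun _ _ => hpw _ _, hmem', ?_,
    fun k => (hpts _).2 (Or.inl ⟨_, rfl⟩), fun k => (hpts _).2 (Or.inr ⟨_, rfl⟩)⟩,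
    by simpa using hp0, ?_⟩
  · intro k k' hk hk' h
    exact natCast_zmod_eq hk hk' (hp h)
  · intro k k' hk hk' h
    have := natCast_zmod_eq hk.le hk'.le (hw h)
    omega
  · intro x
    rw [hpts, hex, hex]
  · rw [← hpm]
    show p ((m - 1 : ℕ) : ZMod m) = p (-1)
    rw [Nat.cast_sub (by omega)]
    simp

/-- The lengths of the two cycles of triples of `Q(z)`. -/
def cycLen (n : ℕ) (b : Bool) : ℕ := bif b then n + 3 else n + 2

lemma cycLen_false (n : ℕ) : cycLen n false = n + 2 := rfl

lemma cycLen_true (n : ℕ) : cycLen n true = n + 3 := rfl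

lemma two_le_cycLen (n : ℕ) (b : Bool) : n + 2 ≤ cycLen n b := by
  cases b <;> simp [cycLen]

/-- Coordinates on `Q(z)`: two cycles of triples `{p b k, p b (k+1), w b k}` through `z`,
and a triple joining the last points of the cycles to the extra point `t`. -/
structure QParam (n : ℕ) (T : Finset (Finset β)) (P : Finset β) (z : β) (p w : Bool → ℕ → β)
    (t : β) : Prop where
  p_zero : ∀ b, p b 0 = z
  p_last : ∀ b, p b (cycLen n b) = z
  p_eq : ∀ {b b' k k'}, k ≤ cycLen n b → k' ≤ cycLen n b' → p b k = p b' k' →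
    (b = b' ∧ k = k') ∨ ((k = 0 ∨ k = cycLen n b) ∧ (k' = 0 ∨ k' = cycLen n b'))
  w_eq : ∀ {b b' k k'}, k < cycLen n b → k' < cycLen n b' → w b k = w b' k' → b = b' ∧ k = k'
  p_ne_w : ∀ b b' k k', p b k ≠ w b' k'
  p_ne_t : ∀ b k, p b k ≠ t
  w_ne_t : ∀ b k, w b k ≠ t
  mem_triples : ∀ s, s ∈ T ↔ (∃ b, ∃ k < cycLen n b, s = {p b k, p b (k + 1), w b k}) ∨
    s = {p false (cycLen n false - 1), p true (cycLen n true - 1), t}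
  mem_pts : ∀ x, x ∈ P ↔ (∃ b, ∃ k < cycLen n b, x = p b k) ∨
    (∃ b, ∃ k < cycLen n b, x = w b k) ∨ x = t

lemma IsQ.exists_qParam {n : ℕ} {T : Finset (Finset β)} {P : Finset β} {z : β}
    (h : IsQ n T P z) : ∃ p w t, QParam n T P z p w t := by
  obtain ⟨C₁, C₂, t, z₁', z₂', z₁, z₂, hT, hC₁, hC₂, hc₁, hc₂, hcap, hd₁, hd₂, ht₁, hd₁', ht₂,
    hd₂', ht, hTeq, hP⟩ := h
  have hsub₁ : IsPSTS C₁ := ⟨fun s hs => hT.1 s (by simp [hTeq, hs]),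
    fun p q hpq s hs s' hs' => hT.2 p q hpq s (by simp [hTeq, hs]) s' (by simp [hTeq, hs'])⟩
  have hsub₂ : IsPSTS C₂ := ⟨fun s hs => hT.1 s (by simp [hTeq, hs]),
    fun p q hpq s hs s' hs' => hT.2 p q hpq s (by simp [hTeq, hs]) s' (by simp [hTeq, hs'])⟩
  obtain ⟨p₁, w₁, h₁, hp₁, hp₁'⟩ := hC₁.exists_isTripleCycle hsub₁ (m := n + 2)
    (by omega) ht₁ hd₁ hd₁'
  obtain ⟨p₂, w₂, h₂, hp₂, hp₂'⟩ := hC₂.exists_isTripleCycle hsub₂ (m := n + 3)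
    (by omega) ht₂ hd₂ hd₂'
  have hz : ∀ {x y : β}, x ∈ ptsOf C₁ → y ∈ ptsOf C₂ → x = y → x = z ∧ y = z := by
    rintro x _ hx hy rfl
    have : x ∈ ({z} : Finset β) := hcap ▸ mem_inter.2 ⟨hx, hy⟩
    simpa using this
  rw [mem_union, not_or] at ht
  have hp12 : ∀ {k k'}, k ≤ n + 2 → k' ≤ n + 3 → p₁ k = p₂ k' →
      (k = 0 ∨ k = n + 2) ∧ (k' = 0 ∨ k' = n + 3) := by
    intro k k' hk hk' e
    obtain ⟨a, b⟩ := hz (h₁.p_mem _) (h₂.p_mem _) e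
    have a1 := h₁.p_eq hk (Nat.zero_le _) (a.trans hp₁.symm)
    have a2 := h₂.p_eq hk' (Nat.zero_le _) (b.trans hp₂.symm)
    omega
  refine ⟨fun b => bif b then p₂ else p₁, fun b => bif b then w₂ else w₁, t, ?_⟩
  constructor
  · rintro (_ | _) <;> assumption
  · rintro (_ | _)
    exacts [h₁.p_last.trans hp₁, h₂.p_last.trans hp₂]
  · rintro (_ | _) (_ | _) k k' hk hk' e
    · exact (h₁.p_eq hk hk' e).imp_left fun e => ⟨rfl, e⟩
    · exact Or.inr (hp12 hk hk' e)
    · exact Or.inr (hp12 hk' hk e.symm).symm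
    · exact (h₂.p_eq hk hk' e).imp_left fun e => ⟨rfl, e⟩
  · rintro (_ | _) (_ | _) k k' hk hk' e
    · exact ⟨rfl, h₁.w_eq hk hk' e⟩
    · exact absurd (hp₁.trans (hz (h₁.w_mem _) (h₂.w_mem _) e).1.symm) (h₁.p_ne_w _ _)
    · exact absurd (hp₁.trans (hz (h₁.w_mem _) (h₂.w_mem _) e.symm).1.symm) (h₁.p_ne_w _ _)
    · exact ⟨rfl, h₂.w_eq hk hk' e⟩
  · rintro (_ | _) (_ | _) k k' e
    · exact h₁.p_ne_w _ _ e
    · exact h₂.p_ne_w _ _ (hp₂.trans (hz (h₁.p_mem _) (h₂.w_mem _) e).2.symm)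
    · exact h₁.p_ne_w _ _ (hp₁.trans (hz (h₁.w_mem _) (h₂.p_mem _) e.symm).1.symm)
    · exact h₂.p_ne_w _ _ e
  · rintro (_ | _) k rfl
    exacts [ht.1 (h₁.p_mem _), ht.2 (h₂.p_mem _)]
  · rintro (_ | _) k rfl
    exacts [ht.1 (h₁.w_mem _), ht.2 (h₂.w_mem _)]
  · intro s
    rw [hTeq, mem_union, mem_union, mem_singleton, h₁.mem_iff, h₂.mem_iff, Bool.exists_bool]
    refine or_congr Iff.rfl ?_
    show _ ↔ s = {p₁ (n + 2 - 1), p₂ (n + 3 - 1), t}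
    rw [hp₁', hp₂', pair_comm z₂' t]
  · intro x
    rw [hP, mem_union, mem_union, mem_singleton, h₁.mem_pts, h₂.mem_pts, Bool.exists_bool,
      Bool.exists_bool]
    simp only [cycLen_false, cycLen_true, cond_false, cond_true]
    rw [or_or_or_comm, or_assoc]

end QParam

section Aut
variable {α β : Type*}

lemma isAut_of_image_mem {T : Finset (Finset β)} {g : Equiv.Perm β}
    (h : ∀ t ∈ T, t.image g ∈ T) : IsAut T g := by
  intro t
  refine ⟨h t, fun ht => ?_⟩
  have hinj : Function.Injective fun s : Finset β => s.image g :=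
    Finset.image_injective g.injective
  have himg : T.image (fun s => s.image g) = T :=
    eq_of_subset_of_card_le (image_subset_iff.2 h) (card_image_of_injective _ hinj).ge
  rw [← himg, mem_image] at ht
  obtain ⟨s, hs, e⟩ := ht
  exact hinj e ▸ hs

lemma AutRestrictIso.nonempty_mulEquiv {T : Finset (Finset β)} {S : Finset (Finset α)} {φ : α → β}
    (h : AutRestrictIso T S φ) (hφ : Function.Injective φ) :
    Nonempty (autGroup T ≃* autGroup S) := by
  choose r hr hrφ using h.1
  have huniq : ∀ (g : autGroup T) (k : Equiv.Perm α), (∀ x, g.1 (φ x) = φ (k x)) →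
      r g.1 g.2 = k := by
    intro g k hk
    ext x
    exact hφ ((hrφ g.1 g.2 x).symm.trans (hk x))
  let f : autGroup T →* autGroup S := MonoidHom.mk' (fun g => ⟨r g.1 g.2, hr g.1 g.2⟩) (by
    intro a b
    refine Subtype.ext (huniq _ _ fun x => ?_)
    exact (congrArg a.1 (hrφ b.1 b.2 x)).trans (hrφ a.1 a.2 _))
  refine ⟨MulEquiv.ofBijective f ⟨?_, ?_⟩⟩
  · intro a b hab
    have hab' : r a.1 a.2 = r b.1 b.2 := congrArg Subtype.val hab
    obtain ⟨g, -, hg⟩ := h.2 (r a.1 a.2) (hr _ _)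
    exact Subtype.ext ((hg a.1 ⟨a.2, hrφ _ _⟩).trans
      (hg b.1 ⟨b.2, fun x => by rw [hab', hrφ b.1 b.2]⟩).symm)
  · rintro ⟨k, hk⟩
    obtain ⟨g, ⟨hg, hgk⟩, -⟩ := h.2 k hk
    exact ⟨⟨g, hg⟩, Subtype.ext (huniq ⟨g, hg⟩ k hgk)⟩

/-- The number of triples of `T` containing `y`. -/
def degree (T : Finset (Finset β)) (y : β) : ℕ := (T.filter fun s => y ∈ s).card

lemma IsAut.degree_eq {T : Finset (Finset β)} {g : Equiv.Perm β} (hg : IsAut T g) (y : β) :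
    degree T (g y) = degree T y := by
  symm
  refine card_bij (fun s _ => s.image g) ?_ ?_ ?_
  · intro s hs
    rw [mem_filter] at hs ⊢
    exact ⟨(hg s).1 hs.1, mem_image_of_mem _ hs.2⟩
  · intro s _ s' _ e
    exact Finset.image_injective g.injective e
  · intro s hs
    rw [mem_filter] at hs
    have e : (s.image ⇑g⁻¹).image g = s := by
      rw [image_image]
      simp [Function.comp_def]
    refine ⟨s.image ⇑g⁻¹, mem_filter.2 ⟨(hg _).2 (by rw [e]; exact hs.1), ?_⟩, e⟩
    exact mem_image.2 ⟨g y, hs.2, by simp⟩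

lemma exists_ne_of_two_le_degree {T : Finset (Finset β)} {y : β} (h : 2 ≤ degree T y)
    (s : Finset β) : ∃ s' ∈ T, s' ≠ s ∧ y ∈ s' := by
  obtain ⟨s', hs', hne⟩ := exists_mem_ne (s := T.filter fun s => y ∈ s) h s
  rw [mem_filter] at hs'
  exact ⟨s', hs'.1, hne, hs'.2⟩

end Aut

section Attachment
variable {α β : Type*} [Fintype α] [Fintype β]

namespace QParam
variable {n : ℕ} {T : Finset (Finset β)} {P : Finset β} {z : β} {p w : Bool → ℕ → β} {t : β}

lemma p_mem (h : QParam n T P z p w t) {b : Bool} {k : ℕ} (hk : k ≤ cycLen n b) : p b k ∈ P := by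
  rw [h.mem_pts]
  rcases hk.lt_or_eq with hk | rfl
  · exact Or.inl ⟨b, k, hk, rfl⟩
  · have := two_le_cycLen n b
    exact Or.inl ⟨b, 0, by omega, by rw [h.p_last, h.p_zero]⟩

lemma w_mem (h : QParam n T P z p w t) {b : Bool} {k : ℕ} (hk : k < cycLen n b) : w b k ∈ P :=
  (h.mem_pts _).2 (Or.inr (Or.inl ⟨b, k, hk, rfl⟩))

lemma t_mem (h : QParam n T P z p w t) : t ∈ P := (h.mem_pts _).2 (Or.inr (Or.inr rfl))

lemma z_mem (h : QParam n T P z p w t) : z ∈ P := h.p_zero true ▸ h.p_mem (Nat.zero_le _)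

lemma cycle_mem (h : QParam n T P z p w t) {b : Bool} {k : ℕ} (hk : k < cycLen n b) :
    {p b k, p b (k + 1), w b k} ∈ T := (h.mem_triples _).2 (Or.inl ⟨b, k, hk, rfl⟩)

lemma join_mem (h : QParam n T P z p w t) :
    {p false (cycLen n false - 1), p true (cycLen n true - 1), t} ∈ T :=
  (h.mem_triples _).2 (Or.inr rfl)

lemma subset_pts (h : QParam n T P z p w t) {s : Finset β} (hs : s ∈ T) : s ⊆ P := by
  rcases (h.mem_triples s).1 hs with ⟨b, k, hk, rfl⟩ | rfl
  · simp only [insert_subset_iff, singleton_subset_iff]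
    exact ⟨h.p_mem hk.le, h.p_mem hk, h.w_mem hk⟩
  · simp only [insert_subset_iff, singleton_subset_iff]
    exact ⟨h.p_mem (Nat.sub_le _ _), h.p_mem (Nat.sub_le _ _), h.t_mem⟩

lemma p_ne_z (h : QParam n T P z p w t) {b : Bool} {k : ℕ} (h0 : 0 < k) (hk : k < cycLen n b) :
    p b k ≠ z := by
  intro e
  have := h.p_eq hk.le (Nat.zero_le _) (e.trans (h.p_zero b).symm)
  omega

lemma w_ne_z (h : QParam n T P z p w t) (b : Bool) (k : ℕ) : w b k ≠ z :=
  fun e => h.p_ne_w b b 0 k ((h.p_zero b).trans e.symm)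

lemma t_ne_z (h : QParam n T P z p w t) : t ≠ z :=
  fun e => h.p_ne_t true 0 ((h.p_zero true).trans e.symm)

lemma cycle_injective (h : QParam n T P z p w t) {b b' : Bool} {k k' : ℕ} (hk : k < cycLen n b)
    (hk' : k' < cycLen n b')
    (e : ({p b k, p b (k + 1), w b k} : Finset β) = {p b' k', p b' (k' + 1), w b' k'}) :
    b = b' ∧ k = k' := by
  have : w b k ∈ ({p b' k', p b' (k' + 1), w b' k'} : Finset β) := by simp [← e]
  simp only [mem_insert, mem_singleton, (h.p_ne_w _ _ _ _).symm, false_or] at this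
  exact h.w_eq hk hk' this

lemma cycle_ne_join (h : QParam n T P z p w t) (b : Bool) (k : ℕ) :
    ({p b k, p b (k + 1), w b k} : Finset β) ≠
      {p false (cycLen n false - 1), p true (cycLen n true - 1), t} := by
  intro e
  have : t ∈ ({p b k, p b (k + 1), w b k} : Finset β) := by simp [e]
  simp only [mem_insert, mem_singleton, (h.p_ne_t _ _).symm, (h.w_ne_t _ _).symm, false_or] at this

lemma eq_of_p_mem (h : QParam n T P z p w t) {s : Finset β} (hs : s ∈ T) {b : Bool} {k : ℕ}
    (hk : k + 1 < cycLen n b) (hp : p b (k + 1) ∈ s) :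
    s = {p b k, p b (k + 1), w b k} ∨ s = {p b (k + 1), p b (k + 2), w b (k + 1)} ∨
      k + 2 = cycLen n b ∧ s = {p false (cycLen n false - 1), p true (cycLen n true - 1), t} := by
  rcases (h.mem_triples s).1 hs with ⟨b', k', hk', rfl⟩ | rfl
  · simp only [mem_insert, mem_singleton, h.p_ne_w, or_false] at hp
    rcases hp with hp | hp
    · have := h.p_eq hk.le hk'.le hp
      obtain ⟨rfl, rfl⟩ : b = b' ∧ k + 1 = k' := by
        rcases this with this | this
        · exact this
        · omega
      exact Or.inr (Or.inl rfl)
    · have := h.p_eq hk.le hk' hp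
      obtain ⟨rfl, rfl⟩ : b = b' ∧ k = k' := by
        rcases this with this | this
        · exact ⟨this.1, by omega⟩
        · omega
      exact Or.inl rfl
  · simp only [mem_insert, mem_singleton, h.p_ne_t, or_false] at hp
    refine Or.inr (Or.inr ⟨?_, rfl⟩)
    rcases hp with hp | hp
    all_goals
      rcases h.p_eq hk.le (Nat.sub_le _ _) hp with ⟨rfl, _⟩ | _
      · omega
      · omega

lemma eq_of_w_mem (h : QParam n T P z p w t) {s : Finset β} (hs : s ∈ T) {b : Bool} {k : ℕ}
    (hk : k < cycLen n b) (hw : w b k ∈ s) : s = {p b k, p b (k + 1), w b k} := by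
  rcases (h.mem_triples s).1 hs with ⟨b', k', hk', rfl⟩ | rfl
  · simp only [mem_insert, mem_singleton, (h.p_ne_w _ _ _ _).symm, false_or] at hw
    obtain ⟨rfl, rfl⟩ := h.w_eq hk hk' hw
    rfl
  · simp only [mem_insert, mem_singleton, (h.p_ne_w _ _ _ _).symm, h.w_ne_t, or_false] at hw

lemma eq_of_t_mem (h : QParam n T P z p w t) {s : Finset β} (hs : s ∈ T) (ht : t ∈ s) :
    s = {p false (cycLen n false - 1), p true (cycLen n true - 1), t} := by
  rcases (h.mem_triples s).1 hs with ⟨b, k, -, rfl⟩ | rfl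
  · simp only [mem_insert, mem_singleton, (h.p_ne_t _ _).symm, (h.w_ne_t _ _).symm, or_false] at ht
  · rfl

end QParam

/-- `T` is obtained from the partial system `S` by attaching, at each point `x`, a copy of `Q(x)`
with point set `P x`, triples `Q x` and coordinates `p x`, `w x`, `t x`. -/
structure IsAttachment (n : ℕ) (S : Finset (Finset α)) (T : Finset (Finset β)) (ι : α → β)
    (P : α → Finset β) (Q : α → Finset (Finset β)) (p w : α → Bool → ℕ → β) (t : α → β) :
    Prop where
  one_le : 1 ≤ n
  isPSTS_base : IsPSTS S
  isPSTS : IsPSTS T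
  inj : Function.Injective ι
  param : ∀ x, QParam n (Q x) (P x) (ι x) (p x) (w x) (t x)
  disj : ∀ {x x' y}, y ∈ P x → y ∈ P x' → x = x'
  cover : ∀ y, ∃ x, y ∈ P x
  mem_iff : ∀ s, s ∈ T ↔ (∃ s' ∈ S, s = s'.image ι) ∨ ∃ x, s ∈ Q x

namespace IsAttachment
variable {n : ℕ} {S : Finset (Finset α)} {T : Finset (Finset β)} {ι : α → β} {P : α → Finset β}
  {Q : α → Finset (Finset β)} {p w : α → Bool → ℕ → β} {t : α → β}

lemma mem_of_mem (h : IsAttachment n S T ι P Q p w t) {x : α} {s : Finset β} (hs : s ∈ Q x) :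
    s ∈ T := (h.mem_iff s).2 (Or.inr ⟨x, hs⟩)

lemma mem_local (h : IsAttachment n S T ι P Q p w t) {x : α} {y : β} {s : Finset β} (hs : s ∈ T)
    (hy : y ∈ P x) (hne : y ≠ ι x) (hys : y ∈ s) : s ∈ Q x := by
  rcases (h.mem_iff s).1 hs with ⟨s', -, rfl⟩ | ⟨x', hx'⟩
  · obtain ⟨x', -, rfl⟩ := mem_image.1 hys
    exact absurd (congrArg ι (h.disj (h.param x').z_mem hy)) hne
  · exact h.disj ((h.param x').subset_pts hx' hys) hy ▸ hx'

lemma degree_w (h : IsAttachment n S T ι P Q p w t) (x : α) {b : Bool} {k : ℕ}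
    (hk : k < cycLen n b) : degree T (w x b k) = 1 := by
  refine card_eq_one.2 ⟨{p x b k, p x b (k + 1), w x b k}, ?_⟩
  ext s
  rw [mem_filter, mem_singleton]
  constructor
  · rintro ⟨hs, hw⟩
    exact (h.param x).eq_of_w_mem
      (h.mem_local hs ((h.param x).w_mem hk) ((h.param x).w_ne_z _ _) hw) hk hw
  · rintro rfl
    exact ⟨h.mem_of_mem ((h.param x).cycle_mem hk), by simp⟩

lemma degree_t (h : IsAttachment n S T ι P Q p w t) (x : α) : degree T (t x) = 1 := by
  refine card_eq_one.2 ⟨{p x false (cycLen n false - 1), p x true (cycLen n true - 1), t x}, ?_⟩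
  ext s
  rw [mem_filter, mem_singleton]
  constructor
  · rintro ⟨hs, ht⟩
    exact (h.param x).eq_of_t_mem (h.mem_local hs (h.param x).t_mem (h.param x).t_ne_z ht) ht
  · rintro rfl
    exact ⟨h.mem_of_mem (h.param x).join_mem, by simp⟩

lemma eq_of_p_mem (h : IsAttachment n S T ι P Q p w t) {x : α} {s : Finset β} (hs : s ∈ T)
    {b : Bool} {k : ℕ} (hk : k + 1 < cycLen n b) (hp : p x b (k + 1) ∈ s) :
    s = {p x b k, p x b (k + 1), w x b k} ∨
      s = {p x b (k + 1), p x b (k + 2), w x b (k + 1)} ∨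
      k + 2 = cycLen n b ∧
        s = {p x false (cycLen n false - 1), p x true (cycLen n true - 1), t x} :=
  (h.param x).eq_of_p_mem (h.mem_local hs ((h.param x).p_mem hk.le)
    ((h.param x).p_ne_z (Nat.succ_pos k) hk) hp) hk hp

lemma degree_p (h : IsAttachment n S T ι P Q p w t) (x : α) {b : Bool} {k : ℕ}
    (hk : k + 2 < cycLen n b) : degree T (p x b (k + 1)) = 2 := by
  refine card_eq_two.2 ⟨{p x b k, p x b (k + 1), w x b k},
    {p x b (k + 1), p x b (k + 2), w x b (k + 1)}, fun e => ?_, ?_⟩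
  · have := (h.param x).cycle_injective (by omega) (by omega) e
    omega
  ext s
  rw [mem_filter, mem_insert, mem_singleton]
  constructor
  · rintro ⟨hs, hp⟩
    rcases h.eq_of_p_mem hs (by omega) hp with e | e | ⟨e, -⟩
    exacts [Or.inl e, Or.inr e, absurd e (by omega)]
  · rintro (rfl | rfl)
    · exact ⟨h.mem_of_mem ((h.param x).cycle_mem (by omega)), by simp⟩
    · exact ⟨h.mem_of_mem ((h.param x).cycle_mem (by omega)), by simp⟩

lemma degree_p_last (h : IsAttachment n S T ι P Q p w t) (x : α) {b : Bool} {k : ℕ}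
    (hk : k + 2 = cycLen n b) : degree T (p x b (k + 1)) = 3 := by
  refine card_eq_three.2 ⟨{p x b k, p x b (k + 1), w x b k},
    {p x b (k + 1), p x b (k + 2), w x b (k + 1)},
    {p x false (cycLen n false - 1), p x true (cycLen n true - 1), t x}, fun e => ?_,
    (h.param x).cycle_ne_join _ _, (h.param x).cycle_ne_join _ _, ?_⟩
  · have := (h.param x).cycle_injective (by omega) (by omega) e
    omega
  ext s
  rw [mem_filter, mem_insert, mem_insert, mem_singleton]
  constructor
  · rintro ⟨hs, hp⟩
    rcases h.eq_of_p_mem hs (by omega) hp with e | e | ⟨-, e⟩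
    exacts [Or.inl e, Or.inr (Or.inl e), Or.inr (Or.inr e)]
  · rintro (rfl | rfl | rfl)
    · exact ⟨h.mem_of_mem ((h.param x).cycle_mem (by omega)), by simp⟩
    · exact ⟨h.mem_of_mem ((h.param x).cycle_mem (by omega)), by simp⟩
    · refine ⟨h.mem_of_mem (h.param x).join_mem, ?_⟩
      have e : k + 1 = cycLen n b - 1 := by omega
      rw [e]
      cases b <;> simp

lemma four_le_degree (h : IsAttachment n S T ι P Q p w t) (x : α) : 4 ≤ degree T (ι x) := by
  have hlen := two_le_cycLen n
  have h1 := h.one_le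
  let f : Bool × Bool → Finset β := fun c =>
    {p x c.1 (bif c.2 then cycLen n c.1 - 1 else 0),
      p x c.1 ((bif c.2 then cycLen n c.1 - 1 else 0) + 1),
      w x c.1 (bif c.2 then cycLen n c.1 - 1 else 0)}
  have hlt : ∀ c : Bool × Bool, (bif c.2 then cycLen n c.1 - 1 else 0) < cycLen n c.1 := by
    rintro ⟨b, _ | _⟩ <;> have := hlen b <;> simp <;> omega
  have hf : Function.Injective f := by
    rintro ⟨b, c⟩ ⟨b', c'⟩ e
    have e' := (h.param x).cycle_injective (hlt (b, c)) (hlt (b', c')) e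
    obtain ⟨rfl : b = b', e'⟩ := e'
    have := hlen b
    cases c <;> cases c' <;> simp at e' ⊢ <;> omega
  calc 4 = (univ.image f).card := by rw [card_image_of_injective _ hf]; rfl
    _ ≤ _ := card_le_card ?_
  intro s hs
  obtain ⟨c, -, rfl⟩ := mem_image.1 hs
  refine mem_filter.2 ⟨h.mem_of_mem ((h.param x).cycle_mem (hlt c)), ?_⟩
  obtain ⟨b, _ | _⟩ := c
  · simp [f, (h.param x).p_zero]
  · have e : cycLen n b - 1 + 1 = cycLen n b := by have := hlen b; omega
    simp [f, e, (h.param x).p_last]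

lemma two_le_degree_p (h : IsAttachment n S T ι P Q p w t) (x : α) {b : Bool} {k : ℕ}
    (hk : k ≤ cycLen n b) : 2 ≤ degree T (p x b k) := by
  rcases hk.lt_or_eq with hk | rfl
  · rcases k with _ | k
    · rw [(h.param x).p_zero]
      exact le_trans (by norm_num) (h.four_le_degree x)
    · rcases (show k + 2 ≤ cycLen n b from hk).lt_or_eq with hk | hk
      · rw [h.degree_p x hk]
      · rw [h.degree_p_last x hk]
        norm_num
  · rw [(h.param x).p_last]
    exact le_trans (by norm_num) (h.four_le_degree x)

lemma point_cases (h : IsAttachment n S T ι P Q p w t) (y : β) : (∃ x, y = ι x) ∨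
    (∃ x b k, k + 1 < cycLen n b ∧ y = p x b (k + 1)) ∨
    (∃ x b k, k < cycLen n b ∧ y = w x b k) ∨ ∃ x, y = t x := by
  obtain ⟨x, hx⟩ := h.cover y
  rcases ((h.param x).mem_pts y).1 hx with ⟨b, _ | k, hk, rfl⟩ | ⟨b, k, hk, rfl⟩ | rfl
  · exact Or.inl ⟨x, (h.param x).p_zero b⟩
  · exact Or.inr (Or.inl ⟨x, b, k, hk, rfl⟩)
  · exact Or.inr (Or.inr (Or.inl ⟨x, b, k, hk, rfl⟩))
  · exact Or.inr (Or.inr (Or.inr ⟨x, rfl⟩))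

lemma degree_le_or (h : IsAttachment n S T ι P Q p w t) (y : β) :
    degree T y ≤ 3 ∨ ∃ x, y = ι x := by
  rcases h.point_cases y with hx | ⟨x, b, k, hk, rfl⟩ | ⟨x, b, k, hk, rfl⟩ | ⟨x, rfl⟩
  · exact Or.inr hx
  · rcases (show k + 2 ≤ cycLen n b from hk).lt_or_eq with hk | hk
    · rw [h.degree_p x hk]
      norm_num
    · rw [h.degree_p_last x hk]
      norm_num
  · rw [h.degree_w x hk]
    norm_num
  · rw [h.degree_t x]
    norm_num

end IsAttachment
end Attachment

section Attachment
variable {α β : Type*} [Fintype α] [Fintype β]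

namespace IsAttachment
variable {n : ℕ} {S : Finset (Finset α)} {T : Finset (Finset β)} {ι : α → β} {P : α → Finset β}
  {Q : α → Finset (Finset β)} {p w : α → Bool → ℕ → β} {t : α → β}

lemma image_mem_iff (h : IsAttachment n S T ι P Q p w t) {s : Finset α} (hs : 2 ≤ s.card) :
    s.image ι ∈ T ↔ s ∈ S := by
  rw [h.mem_iff]
  constructor
  · rintro (⟨s', hs', e⟩ | ⟨x, hx⟩)
    · exact Finset.image_injective h.inj e ▸ hs'
    · obtain ⟨a, ha, b, hb, hab⟩ := one_lt_card.1 hs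
      have hP := (h.param x).subset_pts hx
      exact absurd ((h.disj (h.param a).z_mem (hP (mem_image_of_mem _ ha))).trans
        (h.disj (h.param b).z_mem (hP (mem_image_of_mem _ hb))).symm) hab
  · exact fun hs => Or.inl ⟨s, hs, rfl⟩

lemma exists_restrict (h : IsAttachment n S T ι P Q p w t) {g : Equiv.Perm β} (hg : IsAut T g) :
    ∃ k : Equiv.Perm α, IsAut S k ∧ ∀ x, g (ι x) = ι (k x) := by
  have hex : ∀ x, ∃ x', g (ι x) = ι x' := by
    intro x
    refine (h.degree_le_or (g (ι x))).resolve_left fun hle => ?_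
    have := h.four_le_degree x
    rw [hg.degree_eq] at hle
    omega
  choose f hf using hex
  have hfi : Function.Injective f := fun a b e =>
    h.inj (g.injective ((hf a).trans (e ▸ (hf b).symm)))
  refine ⟨Equiv.ofBijective f (Finite.injective_iff_bijective.1 hfi),
    isAut_of_image_mem fun s hs => ?_, hf⟩
  have hs3 := h.isPSTS_base.1 s hs
  rw [Equiv.coe_ofBijective, ← h.image_mem_iff (by rw [card_image_of_injective _ hfi]; omega)]
  have e : (s.image f).image ι = (s.image ι).image g := by
    rw [image_image, image_image]
    exact image_congr fun x _ => (hf x).symm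
  rw [e, ← hg]
  exact (h.image_mem_iff (by omega)).2 hs

lemma exists_extend (h : IsAttachment n S T ι P Q p w t) {k : Equiv.Perm α} (hk : IsAut S k) :
    ∃ g : Equiv.Perm β, IsAut T g ∧ ∀ x, g (ι x) = ι (k x) := by
  have hlen := two_le_cycLen n
  let G : α → (Bool × ℕ) ⊕ (Bool × ℕ) ⊕ Unit → β := fun x =>
    Sum.elim (fun c => p x c.1 c.2) (Sum.elim (fun c => w x c.1 c.2) fun _ => t x)
  let valid : (Bool × ℕ) ⊕ (Bool × ℕ) ⊕ Unit → Prop :=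
    Sum.elim (fun c => c.2 < cycLen n c.1) (Sum.elim (fun c => c.2 < cycLen n c.1) fun _ => True)
  have hex : ∀ y, ∃ x j, valid j ∧ G x j = y := by
    intro y
    obtain ⟨x, hx⟩ := h.cover y
    rcases ((h.param x).mem_pts y).1 hx with ⟨b, i, hi, rfl⟩ | ⟨b, i, hi, rfl⟩ | rfl
    exacts [⟨x, Sum.inl (b, i), hi, rfl⟩, ⟨x, Sum.inr (Sum.inl (b, i)), hi, rfl⟩,
      ⟨x, Sum.inr (Sum.inr ()), trivial, rfl⟩]
  have hGmem : ∀ x j, valid j → G x j ∈ P x := by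
    rintro x (⟨b, i⟩ | ⟨b, i⟩ | _) hj
    exacts [(h.param x).p_mem (le_of_lt hj), (h.param x).w_mem hj, (h.param x).t_mem]
  have hker : ∀ x x' j j', valid j → valid j' → G x j = G x' j' →
      x = x' ∧ ∀ y, G y j = G y j' := by
    intro x x' j j' hj hj' e
    obtain rfl : x = x' := h.disj (hGmem x j hj) (e ▸ hGmem x' j' hj')
    refine ⟨rfl, fun y => ?_⟩
    have hx := h.param x
    obtain ⟨b, i⟩ | ⟨b, i⟩ | _ := j <;> obtain ⟨b', i'⟩ | ⟨b', i'⟩ | _ := j'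
    · change i < cycLen n b at hj
      change i' < cycLen n b' at hj'
      rcases hx.p_eq hj.le hj'.le e with ⟨rfl, rfl⟩ | hz
      · rfl
      · obtain ⟨rfl, rfl⟩ : i = 0 ∧ i' = 0 := by omega
        exact ((h.param y).p_zero b).trans ((h.param y).p_zero b').symm
    · exact absurd e (hx.p_ne_w _ _ _ _)
    · exact absurd e (hx.p_ne_t _ _)
    · exact absurd e.symm (hx.p_ne_w _ _ _ _)
    · obtain ⟨rfl, rfl⟩ := hx.w_eq hj hj' e
      rfl
    · exact absurd e (hx.w_ne_t _ _)
    · exact absurd e.symm (hx.p_ne_t _ _)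
    · exact absurd e.symm (hx.w_ne_t _ _)
    · rfl
  choose X J hJ hXJ using hex
  have hg : ∀ x j, valid j → G (k (X (G x j))) (J (G x j)) = G (k x) j := by
    intro x j hj
    obtain ⟨e, e'⟩ := hker _ _ _ _ (hJ _) hj (hXJ (G x j))
    rw [e, e']
  have hinj : Function.Injective fun y => G (k (X y)) (J y) := by
    intro y y' e
    obtain ⟨e₁, e₂⟩ := hker _ _ _ _ (hJ y) (hJ y') e
    rw [← hXJ y, ← hXJ y', k.injective e₁, e₂]
  let g : Equiv.Perm β := Equiv.ofBijective _ (Finite.injective_iff_bijective.1 hinj)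
  have hgp : ∀ x b i, i ≤ cycLen n b → g (p x b i) = p (k x) b i := by
    intro x b i hi
    rcases hi.lt_or_eq with hi | rfl
    · exact hg x (Sum.inl (b, i)) hi
    · rw [(h.param x).p_last, (h.param (k x)).p_last, ← (h.param x).p_zero b,
        ← (h.param (k x)).p_zero b]
      exact hg x (Sum.inl (b, 0)) (show 0 < cycLen n b by have := hlen b; omega)
  have hgw : ∀ x b i, i < cycLen n b → g (w x b i) = w (k x) b i :=
    fun x b i hi => hg x (Sum.inr (Sum.inl (b, i))) hi
  have hgt : ∀ x, g (t x) = t (k x) := fun x => hg x (Sum.inr (Sum.inr ())) trivial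
  have hgι : ∀ x, g (ι x) = ι (k x) := by
    intro x
    rw [← (h.param x).p_zero true, ← (h.param (k x)).p_zero true]
    exact hgp x true 0 (Nat.zero_le _)
  refine ⟨g, isAut_of_image_mem fun s hs => ?_, hgι⟩
  rcases (h.mem_iff s).1 hs with ⟨s', hs', rfl⟩ | ⟨x, hx⟩
  · refine (h.mem_iff _).2 (Or.inl ⟨s'.image k, (hk s').1 hs', ?_⟩)
    rw [image_image, image_image]
    exact image_congr fun x _ => hgι x
  · refine h.mem_of_mem (x := k x) ?_
    rcases ((h.param x).mem_triples s).1 hx with ⟨b, i, hi, rfl⟩ | rfl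
    · rw [image_insert, image_insert, image_singleton, hgp _ _ _ hi.le, hgp _ _ _ hi, hgw _ _ _ hi]
      exact (h.param (k x)).cycle_mem hi
    · rw [image_insert, image_insert, image_singleton, hgp _ _ _ (Nat.sub_le _ _),
        hgp _ _ _ (Nat.sub_le _ _), hgt]
      exact (h.param (k x)).join_mem

lemma eq_p_one (h : IsAttachment n S T ι P Q p w t) {x : α} {y : β} {s : Finset β} (hs : s ∈ T)
    (hx : ι x ∈ s) (hy : y ∈ s) (hd : degree T y = 2) : ∃ b, y = p x b 1 := by
  have hlen := two_le_cycLen n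
  rcases h.point_cases y with ⟨x', rfl⟩ | ⟨x', b, i, hi, rfl⟩ | ⟨x', b, i, hi, rfl⟩ | ⟨x', rfl⟩
  · have := h.four_le_degree x'
    omega
  · have hi' : i + 2 ≠ cycLen n b := fun e => by
      have := h.degree_p_last x' e
      omega
    have hx' := h.param x'
    have hsQ := h.mem_local hs (hx'.p_mem hi.le) (hx'.p_ne_z (Nat.succ_pos i) hi) hy
    obtain rfl := h.disj (h.param x).z_mem (hx'.subset_pts hsQ hx)
    refine ⟨b, ?_⟩
    rcases h.eq_of_p_mem hs hi hy with rfl | rfl | ⟨e, -⟩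
    · simp only [mem_insert, mem_singleton, (hx'.w_ne_z _ _).symm, or_false] at hx
      rcases hx with e | e
      · rcases i with _ | i
        · rfl
        · exact absurd e.symm (hx'.p_ne_z (Nat.succ_pos i) (by omega))
      · exact absurd e.symm (hx'.p_ne_z (Nat.succ_pos i) hi)
    · simp only [mem_insert, mem_singleton, (hx'.w_ne_z _ _).symm, or_false] at hx
      rcases hx with e | e
      · exact absurd e.symm (hx'.p_ne_z (Nat.succ_pos i) hi)
      · exact absurd e.symm (hx'.p_ne_z (Nat.succ_pos _) (by omega))
    · exact absurd e hi'
  · rw [h.degree_w x' hi] at hd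
    omega
  · rw [h.degree_t] at hd
    omega

lemma walk (h : IsAttachment n S T ι P Q p w t) {g : Equiv.Perm β} (hg : IsAut T g) {x : α}
    (hx : g (ι x) = ι x) {b b' : Bool} (h1 : g (p x b 1) = p x b' 1) (k : ℕ)
    (hk : k + 1 < cycLen n b) (hk' : k + 1 < cycLen n b') :
    g (p x b k) = p x b' k ∧ g (p x b (k + 1)) = p x b' (k + 1) := by
  have hx' := h.param x
  induction k with
  | zero => exact ⟨by rw [hx'.p_zero, hx'.p_zero, hx], h1⟩
  | succ k ih =>
    obtain ⟨e₁, e₂⟩ := ih (by omega) (by omega)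
    refine ⟨e₂, ?_⟩
    have hm := (hg _).1 (h.mem_of_mem (hx'.cycle_mem (b := b) (k := k) (by omega)))
    have hm' := (hg _).1 (h.mem_of_mem (hx'.cycle_mem (b := b) (k := k + 1) (by omega)))
    have hne : ({p x b k, p x b (k + 1), w x b k} : Finset β).image g ≠
        ({p x b (k + 1), p x b (k + 1 + 1), w x b (k + 1)} : Finset β).image g := by
      intro e
      have := hx'.cycle_injective (by omega) (by omega) (Finset.image_injective g.injective e)
      omega
    have hT : ({p x b' k, p x b' (k + 1), w x b' k} : Finset β) ∈ T :=
      h.mem_of_mem (hx'.cycle_mem (by omega))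
    have hpp : p x b' k ≠ p x b' (k + 1) := (ne_of_triple_mem h.isPSTS.1 hT).1
    have hfst : ({p x b k, p x b (k + 1), w x b k} : Finset β).image g =
        {p x b' k, p x b' (k + 1), w x b' k} :=
      h.isPSTS.2 _ _ hpp _ hm _ hT (by simp [← e₁]) (by simp [← e₂]) (by simp) (by simp)
    have hsnd : ({p x b (k + 1), p x b (k + 1 + 1), w x b (k + 1)} : Finset β).image g =
        {p x b' (k + 1), p x b' (k + 2), w x b' (k + 1)} := by
      rcases h.eq_of_p_mem hm' (x := x) (b := b') (k := k) (by omega) (by simp [← e₂]) with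
        e | e | ⟨e, -⟩
      · exact absurd (hfst.trans e.symm) hne
      · exact e
      · omega
    have hmem : g (p x b (k + 1 + 1)) ∈
        ({p x b' (k + 1), p x b' (k + 2), w x b' (k + 1)} : Finset β) := by
      rw [← hsnd]
      exact mem_image_of_mem _ (by simp)
    simp only [mem_insert, mem_singleton] at hmem
    rcases hmem with e | e | e
    · have hT' := h.mem_of_mem (hx'.cycle_mem (b := b) (k := k + 1) (by omega))
      exact absurd (g.injective (e.trans e₂.symm)).symm (ne_of_triple_mem h.isPSTS.1 hT').1
    · exact e
    · have hd := h.two_le_degree_p x (b := b) (k := k + 1 + 1) (by omega)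
      rw [← hg.degree_eq, e, h.degree_w x (by omega)] at hd
      omega

lemma apply_p (h : IsAttachment n S T ι P Q p w t) {g : Equiv.Perm β} (hg : IsAut T g) {x : α}
    (hx : g (ι x) = ι x) {b : Bool} {k : ℕ} (hk : k ≤ cycLen n b) : g (p x b k) = p x b k := by
  have hlen := two_le_cycLen n
  have h1 := h.one_le
  have hx' := h.param x
  have hs := (hg _).1 (h.mem_of_mem (hx'.cycle_mem (b := b) (k := 0) (by have := hlen b; omega)))
  obtain ⟨b', hb'⟩ := h.eq_p_one (x := x) (y := g (p x b 1)) hs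
    (by rw [hx'.p_zero, image_insert, hx]; simp) (mem_image_of_mem _ (by simp))
    (by rw [hg.degree_eq, h.degree_p x (by have := hlen b; omega)])
  have hbb : b = b' := by
    have hend := (h.walk hg hx hb' n (by have := hlen b; omega) (by have := hlen b'; omega)).2
    have hdeg := hg.degree_eq (p x b (n + 1))
    have hf := h.degree_p_last x (b := false) (k := n) rfl
    have ht := h.degree_p x (b := true) (k := n) (by rw [cycLen_true]; omega)
    rw [hend] at hdeg
    cases b <;> cases b' <;> first | rfl | omega
  subst hbb
  rcases k with _ | k
  · rw [hx'.p_zero, hx]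
  · rcases (show k + 1 ≤ cycLen n b from hk).lt_or_eq with hk | hk
    · exact (h.walk hg hx hb' k hk hk).2
    · rw [hk, hx'.p_last, hx]

lemma eq_one (h : IsAttachment n S T ι P Q p w t) {g : Equiv.Perm β} (hg : IsAut T g)
    (hι : ∀ x, g (ι x) = ι x) : g = 1 := by
  have third : ∀ a b c : β, ({a, b, c} : Finset β) ∈ T → g a = a → g b = b → g c = c := by
    intro a b c hT ha hb
    have hne := ne_of_triple_mem h.isPSTS.1 hT
    have hT' := (hg.triple_mem_iff a b c).1 hT
    rw [ha, hb] at hT'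
    have e := h.isPSTS.2 a b hne.1 _ hT' _ hT (by simp) (by simp) (by simp) (by simp)
    have hc : c ∈ ({a, b, g c} : Finset β) := by simp [e]
    simp only [mem_insert, mem_singleton, hne.2.1.symm, hne.2.2.symm, false_or] at hc
    exact hc.symm
  ext y
  show g y = y
  rcases h.point_cases y with ⟨x, rfl⟩ | ⟨x, b, k, hk, rfl⟩ | ⟨x, b, k, hk, rfl⟩ | ⟨x, rfl⟩
  · exact hι x
  · exact h.apply_p hg (hι x) hk.le
  · exact third _ _ _ (h.mem_of_mem ((h.param x).cycle_mem hk)) (h.apply_p hg (hι x) hk.le)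
      (h.apply_p hg (hι x) hk)
  · exact third _ _ _ (h.mem_of_mem (h.param x).join_mem)
      (h.apply_p hg (hι x) (Nat.sub_le _ _)) (h.apply_p hg (hι x) (Nat.sub_le _ _))

lemma autRestrictIso (h : IsAttachment n S T ι P Q p w t) : AutRestrictIso T S ι := by
  refine ⟨fun g hg => h.exists_restrict hg, fun k hk => ?_⟩
  obtain ⟨g, hg, hgk⟩ := h.exists_extend hk
  refine ⟨g, ⟨hg, hgk⟩, ?_⟩
  rintro g' ⟨hg', hgk'⟩
  have hmem : g⁻¹ * g' ∈ autGroup T := mul_mem (inv_mem (show g ∈ autGroup T from hg)) hg'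
  have := h.eq_one (g := g⁻¹ * g') hmem fun x => by
    rw [Equiv.Perm.mul_apply, hgk', ← hgk]
    exact g.symm_apply_apply _
  exact (inv_mul_eq_one.1 this).symm

lemma exists_mem (h : IsAttachment n S T ι P Q p w t) (y : β) : ∃ s ∈ T, y ∈ s := by
  have hpos : 0 < degree T y := by
    rcases h.point_cases y with ⟨x, rfl⟩ | ⟨x, b, k, hk, rfl⟩ | ⟨x, b, k, hk, rfl⟩ | ⟨x, rfl⟩
    · have := h.four_le_degree x
      omega
    · have := h.two_le_degree_p x hk.le
      omega
    · rw [h.degree_w x hk]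
      norm_num
    · rw [h.degree_t x]
      norm_num
  obtain ⟨s, hs⟩ := card_pos.1 hpos
  rw [mem_filter] at hs
  exact ⟨s, hs⟩

lemma exists_two_le_degree (h : IsAttachment n S T ι P Q p w t) {s : Finset β} (hs : s ∈ T) :
    ∃ a ∈ s, ∃ b ∈ s, a ≠ b ∧ 2 ≤ degree T a ∧ 2 ≤ degree T b := by
  rcases (h.mem_iff s).1 hs with ⟨s', hs', rfl⟩ | ⟨x, hx⟩
  · have := h.isPSTS_base.1 s' hs'
    obtain ⟨a, ha, b, hb, hab⟩ := one_lt_card.1 (show 1 < s'.card by omega)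
    exact ⟨_, mem_image_of_mem _ ha, _, mem_image_of_mem _ hb, fun e => hab (h.inj e),
      le_trans (by norm_num) (h.four_le_degree a), le_trans (by norm_num) (h.four_le_degree b)⟩
  · rcases ((h.param x).mem_triples s).1 hx with ⟨b, k, hk, rfl⟩ | rfl
    · exact ⟨_, by simp, _, by simp, (ne_of_triple_mem h.isPSTS.1 hs).1,
        h.two_le_degree_p x hk.le, h.two_le_degree_p x hk⟩
    · exact ⟨_, by simp, _, by simp, (ne_of_triple_mem h.isPSTS.1 hs).1,
        h.two_le_degree_p x (Nat.sub_le _ _), h.two_le_degree_p x (Nat.sub_le _ _)⟩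

lemma exists_not_collinear (h : IsAttachment n S T ι P Q p w t) (hN : 14 ≤ Fintype.card β)
    (a b : β) : ∃ d, d ≠ a ∧ d ≠ b ∧ ∀ s ∈ T, a ∈ s → d ∉ s := by
  rcases h.degree_le_or a with ha | ⟨x, rfl⟩
  · have hcard : ((T.filter fun s => a ∈ s).biUnion id).card ≤ 3 * 3 := by
      refine (card_biUnion_le_card_mul _ _ 3 fun s hs => ?_).trans (Nat.mul_le_mul_right 3 ha)
      exact (h.isPSTS.1 s (mem_filter.1 hs).1).le
    have hlt : (insert a (insert b ((T.filter fun s => a ∈ s).biUnion id))).card <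
        (univ : Finset β).card := by
      rw [card_univ]
      have h1 := card_insert_le a (insert b ((T.filter fun s => a ∈ s).biUnion id))
      have h2 := card_insert_le b ((T.filter fun s => a ∈ s).biUnion id)
      omega
    obtain ⟨d, -, hd⟩ := exists_mem_notMem_of_card_lt_card hlt
    simp only [mem_insert, mem_biUnion, mem_filter, id, not_or, not_exists, not_and] at hd
    exact ⟨d, hd.1, hd.2.1, fun s hs has => hd.2.2 s ⟨hs, has⟩⟩
  · have hx := h.param x
    have h1 := h.one_le
    by_cases hb : t x = b
    · refine ⟨w x false 1, hx.w_ne_z _ _, fun e => hx.w_ne_t _ _ (e.trans hb.symm), ?_⟩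
      intro s hs hxs hws
      have hk : 1 < cycLen n false := by rw [cycLen_false]; omega
      have hs' := h.mem_local hs (hx.w_mem hk) (hx.w_ne_z _ _) hws
      rw [hx.eq_of_w_mem hs' hk hws] at hxs
      simp only [mem_insert, mem_singleton, (hx.w_ne_z _ _).symm, or_false] at hxs
      rcases hxs with e | e
      · exact hx.p_ne_z (by norm_num) hk e.symm
      · exact hx.p_ne_z (by norm_num) (by rw [cycLen_false]; omega) e.symm
    · refine ⟨t x, hx.t_ne_z, hb, ?_⟩
      intro s hs hxs hts
      rw [hx.eq_of_t_mem (h.mem_local hs hx.t_mem hx.t_ne_z hts) hts] at hxs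
      simp only [mem_insert, mem_singleton, hx.t_ne_z.symm, or_false] at hxs
      rcases hxs with e | e
      · exact hx.p_ne_z (by rw [cycLen_false]; omega) (by rw [cycLen_false]; omega) e.symm
      · exact hx.p_ne_z (by rw [cycLen_true]; omega) (by rw [cycLen_true]; omega) e.symm

lemma nonempty_autGroup_cameronSTS_mulEquiv (h : IsAttachment n S T ι P Q p w t)
    (hN : 14 ≤ Fintype.card β) : Nonempty (autGroup (CameronSTS T) ≃* autGroup T) := by
  refine _root_.nonempty_autGroup_cameronSTS_mulEquiv h.isPSTS hN h.exists_mem ?_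
    fun a b _ => h.exists_not_collinear hN a b
  intro s hs
  obtain ⟨a, ha, b, hb, hab, hda, hdb⟩ := h.exists_two_le_degree hs
  exact ⟨a, ha, b, hb, hab, exists_ne_of_two_le_degree hda s, exists_ne_of_two_le_degree hdb s⟩

end IsAttachment

lemma IsQ.isPSTS {n : ℕ} {T : Finset (Finset β)} {P : Finset β} {z : β} (h : IsQ n T P z) :
    IsPSTS T := by
  obtain ⟨C₁, C₂, t, z₁', z₂', z₁, z₂, hT, -⟩ := h
  exact hT

lemma IsQ.card_pts {n : ℕ} {T : Finset (Finset β)} {P : Finset β} {z : β} (h : IsQ n T P z) :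
    P.card = 4 * n + 10 := by
  obtain ⟨C₁, C₂, t, z₁', z₂', z₁, z₂, -, -, -, hc₁, hc₂, hcap, -, -, -, -, -, -, ht, -, rfl⟩ := h
  rw [card_union_of_disjoint (disjoint_singleton_right.2 ht), card_singleton]
  have := card_union_add_card_inter (ptsOf C₁) (ptsOf C₂)
  rw [hcap, card_singleton] at this
  omega

end Attachment

section Attachment
variable {α β : Type*} [Fintype α] [Fintype β]

lemma isPSTS_attach {S : Finset (Finset α)} (hS : IsPSTS S) {T : Finset (Finset β)} {ι : α → β}
    (hι : Function.Injective ι) {P : α → Finset β} {Q : α → Finset (Finset β)}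
    (hQ : ∀ x, IsPSTS (Q x)) (hsub : ∀ x, ∀ s ∈ Q x, s ⊆ P x) (hmem : ∀ x, ι x ∈ P x)
    (hdisj : ∀ {x x' y}, y ∈ P x → y ∈ P x' → x = x')
    (hT : ∀ s, s ∈ T ↔ (∃ s' ∈ S, s = s'.image ι) ∨ ∃ x, s ∈ Q x) : IsPSTS T := by
  have hmixed : ∀ (s' : Finset α) (x : α), ∀ s ∈ Q x, ∀ a b : β, a ≠ b → a ∈ s'.image ι →
      b ∈ s'.image ι → a ∈ s → b ∉ s := by
    intro s' x s hs a b hab ha hb has hbs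
    obtain ⟨a', -, rfl⟩ := mem_image.1 ha
    obtain ⟨b', -, rfl⟩ := mem_image.1 hb
    exact hab (congrArg ι ((hdisj (hmem a') (hsub x s hs has)).trans
      (hdisj (hmem b') (hsub x s hs hbs)).symm))
  constructor
  · intro s hs
    rcases (hT s).1 hs with ⟨s', hs', rfl⟩ | ⟨x, hx⟩
    · rw [card_image_of_injective _ hι, hS.1 s' hs']
    · exact (hQ x).1 s hx
  · intro a b hab s₁ hs₁ s₂ hs₂ ha₁ hb₁ ha₂ hb₂
    rcases (hT s₁).1 hs₁ with ⟨s₁', h₁, rfl⟩ | ⟨x₁, h₁⟩ <;>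
      rcases (hT s₂).1 hs₂ with ⟨s₂', h₂, rfl⟩ | ⟨x₂, h₂⟩
    · obtain ⟨a', ha', rfl⟩ := mem_image.1 ha₁
      obtain ⟨b', hb', rfl⟩ := mem_image.1 hb₁
      rw [hι.mem_finset_image] at ha₂ hb₂
      rw [hS.2 a' b' (fun e => hab (congrArg ι e)) s₁' h₁ s₂' h₂ ha' hb' ha₂ hb₂]
    · exact absurd hb₂ (hmixed s₁' x₂ s₂ h₂ a b hab ha₁ hb₁ ha₂)
    · exact absurd hb₁ (hmixed s₂' x₁ s₁ h₁ a b hab ha₂ hb₂ ha₁)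
    · obtain rfl := hdisj (hsub _ _ h₁ ha₁) (hsub _ _ h₂ ha₂)
      exact (hQ x₁).2 a b hab s₁ h₁ s₂ h₂ ha₁ hb₁ ha₂ hb₂

end Attachment

/-- **Section 4.1 (Proposition 4.5).** Let `V` be a PSTS on `n ≥ 1` points and `V'`
the PSTS on `4n² + 10n` points obtained by attaching a copy `Q(x)` of `Q(z)` to each
point `x` of `V` (pairwise disjoint, meeting `V` exactly in `x`).  Let `P` be the
projective space over `GF(2)` on the nonempty subsets of `V'` and let `U` be
Cameron's modification of `P` along the triples of `V'`.  Then `U` is a Steiner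
triple system and `Aut U ≅ Aut V' ≅ Aut V`. -/
theorem stmt15 {α β : Type*} [Fintype α] [Fintype β]
    (TV : Finset (Finset α)) (hV : IsPSTS TV) (hn : 1 ≤ Fintype.card α)
    (TV' : Finset (Finset β)) (ι : α → β) (hι : Function.Injective ι)
    (Qp : α → Finset β) (Qt : α → Finset (Finset β))
    (hQ : ∀ x : α, IsQ (Fintype.card α) (Qt x) (Qp x) (ι x))
    (hmeet : ∀ x : α, Qp x ∩ Finset.univ.image ι = {ι x})
    (hdisj : ∀ x y : α, x ≠ y → Qp x ∩ Qp y = ∅)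
    (hcover : (Finset.univ : Finset β) = Finset.univ.biUnion Qp)
    (htri : TV' = (TV.image fun t => t.image ι) ∪ Finset.univ.biUnion Qt) :
    Fintype.card β = 4 * Fintype.card α ^ 2 + 10 * Fintype.card α ∧
    IsPSTS TV' ∧
    IsSTS (CameronSTS TV') ∧
    Nonempty (autGroup (CameronSTS TV') ≃* autGroup TV') ∧
    Nonempty (autGroup TV' ≃* autGroup TV) := by
  have hdisj' : ∀ {x x' : α} {y : β}, y ∈ Qp x → y ∈ Qp x' → x = x' := by
    intro x x' y hx hx'
    by_contra hne
    have : y ∈ (∅ : Finset β) := hdisj x x' hne ▸ mem_inter.2 ⟨hx, hx'⟩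
    simp at this
  have hcard : Fintype.card β = 4 * Fintype.card α ^ 2 + 10 * Fintype.card α := by
    rw [← card_univ (α := β), hcover, card_biUnion fun x _ y _ hxy =>
      disjoint_iff_inter_eq_empty.2 (hdisj x y hxy), sum_congr rfl fun x _ => (hQ x).card_pts,
      sum_const, card_univ, smul_eq_mul]
    ring
  have hN : 14 ≤ Fintype.card β := by
    rw [hcard]
    nlinarith
  have hmem : ∀ s, s ∈ TV' ↔ (∃ s' ∈ TV, s = s'.image ι) ∨ ∃ x, s ∈ Qt x := by
    intro s
    simp only [htri, mem_union, mem_image, mem_biUnion, mem_univ, true_and, eq_comm (a := s)]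
  choose p w t hparam using fun x => (hQ x).exists_qParam
  have hP : IsPSTS TV' := isPSTS_attach hV hι (fun x => (hQ x).isPSTS)
    (fun x _ hs => (hparam x).subset_pts hs) (fun x => (hparam x).z_mem) hdisj' hmem
  have hA : IsAttachment (Fintype.card α) TV TV' ι Qp Qt p w t :=
    { one_le := hn
      isPSTS_base := hV
      isPSTS := hP
      inj := hι
      param := hparam
      disj := hdisj'
      cover := fun y => by
        have hy : y ∈ univ.biUnion Qp := hcover ▸ mem_univ y
        simpa using hy
      mem_iff := hmem }
  exact ⟨hcard, hP, isSTS_cameronSTS hP, hA.nonempty_autGroup_cameronSTS_mulEquiv hN,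
    hA.autRestrictIso.nonempty_mulEquiv hι⟩

end
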